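/- The hypergeometric value ₆F₅(1/2,1/2,1/2,1/2,1/2,1/2; 1,1,1,1,1; 1) = ∑_{k=0}^∞ ((1/2)_k / k!)⁶ equals 16 times the integral of τ² · ( η(τ)¹² + 32 η(τ)⁴ η(4τ)⁸ ) dτ along the straight segment in the upper half-plane from τ = (1+i)/2 to τ = (−1+i)/2; that is, ∑_{k=0}^∞ ((1/2)_k / k!)⁶ = −16 ∫_{−1/2}^{1/2} (t + i/2)² · ( η(t+i/2)¹² + 32 η(t+i/2)⁴ η(4t+2i)⁸ ) dt. (Here η(τ)¹² + 32 η(τ)⁴ η(4τ)⁸ is the eta-product expression for the weight-6 newform f_{8.6.a.a} evaluated at τ/2.) -/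

import Mathlib

open Complex Real

/-- The Pochhammer symbol `(a)ₖ = a(a+1)⋯(a+k−1)`. -/
noncomputable def poch (a : ℂ) (k : ℕ) : ℂ := ∏ i ∈ Finset.range k, (a + i)

/-- The generalized hypergeometric series
`ₙFₙ₋₁(a₁,…,aₙ; b₂,…,bₙ; z) = ∑ₖ (a₁)ₖ⋯(aₙ)ₖ / ((1)ₖ(b₂)ₖ⋯(bₙ)ₖ) · zᵏ`. -/
noncomputable def hypF (upper lower : List ℂ) (z : ℂ) : ℂ :=
  ∑' k : ℕ, (upper.map fun a => poch a k).prod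
    / (poch 1 k * (lower.map fun b => poch b k).prod) * z ^ k

/-- The Dedekind eta function `η(τ) = e^{πiτ/12} ∏ₙ (1 − e^{2πinτ})` on the upper
half-plane (as a function on all of `ℂ`). -/
noncomputable def dedekindEta (τ : ℂ) : ℂ :=
  Complex.exp (Real.pi * Complex.I * τ / 12)
    * ∏' n : ℕ, (1 - Complex.exp (2 * Real.pi * Complex.I * ((n : ℂ) + 1) * τ))

/-!
Write `z(q) = -64 (η(2τ)/η(τ))²⁴`, with `q = exp(2πiτ)`, and `a k = (1/2)ₖ / k!`. The logarithmic
derivative `q d/dq` of `z` is the weight two form `e = 2 θ₃⁴ - θ₄⁴`, so averaging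
`e zᵐ` over a circle around `q = 0` extracts coefficients of power series in `z`. Ramanujan's
differential equations for `θ₃` and `θ₄` yield a primitive which shows that the averages of
`θ₄⁴ e z⁻ᵏ` satisfy the recursion of `(a k)³`; hence they are equal to `(a k)³`, and
`θ₄⁴ = ∑ (a k)³ zᵏ` near `q = 0`.

On the circle `|q| = e^(-π)`, that is `Im τ = 1/2`, one has `|z| ≥ 1`. Summing `(a k)³` times the
averages therefore shows that `∑ (a k)⁶` is the average of `θ₄⁴ e ∑ (a k)³ z⁻ᵏ`. The inversion
`τ ↦ -1/(2τ)` replaces `z` by `1/z`, so that the inner series is `θ₄⁴` at the inverted point, and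
the eta quotients for the three factors multiply to `-16 τ² (η(τ)¹² + 32 η(τ)⁴ η(4τ)⁸)`.
-/

open Filter Topology Metric Set
open Function.Periodic (qParam)

section QPochhammer

variable {x q p : ℂ}

/-- The infinite `q`-Pochhammer symbol `(x; p)_∞ = ∏_{k ≥ 0} (1 - x pᵏ)`. -/
noncomputable def qPochhammer (x p : ℂ) : ℂ := ∏' k : ℕ, (1 - x * p ^ k)

/-- Euler's function `(q; q)_∞`, the Dedekind eta function stripped of the factor `q^(1/24)`. -/
noncomputable def eulerFunction (q : ℂ) : ℂ := qPochhammer q q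

lemma norm_pow_lt_one (hq : ‖q‖ < 1) {n : ℕ} (hn : n ≠ 0) : ‖q ^ n‖ < 1 := by
  simpa only [norm_pow] using pow_lt_one₀ (norm_nonneg q) hq hn

lemma one_sub_ne_zero_of_norm_lt_one (hq : ‖q‖ < 1) : 1 - q ≠ 0 :=
  sub_ne_zero.mpr fun h => by simp [← h] at hq

lemma summable_norm_mul_pow (x : ℂ) (hp : ‖p‖ < 1) : Summable fun k : ℕ => ‖-(x * p ^ k)‖ := by
  simpa only [norm_neg, norm_mul, norm_pow] using
    (summable_geometric_of_lt_one (norm_nonneg p) hp).mul_left ‖x‖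

lemma multipliable_one_sub_mul_pow (x : ℂ) (hp : ‖p‖ < 1) :
    Multipliable fun k : ℕ => 1 - x * p ^ k := by
  simpa only [sub_eq_add_neg] using multipliable_one_add_of_summable (summable_norm_mul_pow x hp)

lemma tendsto_prod_qPochhammer (x : ℂ) (hp : ‖p‖ < 1) :
    Tendsto (fun n => ∏ k ∈ Finset.range n, (1 - x * p ^ k)) atTop (𝓝 (qPochhammer x p)) :=
  (multipliable_one_sub_mul_pow x hp).hasProd.tendsto_prod_nat

lemma qPochhammer_ne_zero (hx : ‖x‖ < 1) (hp : ‖p‖ < 1) : qPochhammer x p ≠ 0 := by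
  have factor_ne (k : ℕ) : 1 + -(x * p ^ k) ≠ 0 := by
    rw [← sub_eq_add_neg]
    refine one_sub_ne_zero_of_norm_lt_one ?_
    rw [norm_mul, norm_pow]
    exact (mul_le_of_le_one_right (norm_nonneg x)
      (pow_le_one₀ (norm_nonneg p) hp.le)).trans_lt hx
  simpa only [qPochhammer, sub_eq_add_neg] using
    tprod_one_add_ne_zero_of_summable factor_ne (summable_norm_mul_pow x hp)

lemma qPochhammer_eq_one_sub_mul (x : ℂ) (hp : ‖p‖ < 1) :
    qPochhammer x p = (1 - x) * qPochhammer (x * p) p := by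
  have shift (k : ℕ) : 1 - x * p ^ (k + 1) = 1 - x * p * p ^ k := by ring
  rw [qPochhammer, tprod_eq_zero_mul']
  · simp only [pow_zero, mul_one, shift, qPochhammer]
  · simpa only [shift] using multipliable_one_sub_mul_pow (x * p) hp

lemma qPochhammer_sq_mul (x : ℂ) (hp : ‖p‖ < 1) :
    qPochhammer x (p ^ 2) * qPochhammer (x * p) (p ^ 2) = qPochhammer x p := by
  have hp2 := norm_pow_lt_one hp two_ne_zero
  have even (k : ℕ) : 1 - x * (p ^ 2) ^ k = 1 - x * p ^ (2 * k) := by ring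
  have odd (k : ℕ) : 1 - x * p * (p ^ 2) ^ k = 1 - x * p ^ (2 * k + 1) := by ring
  simp only [qPochhammer, even, odd]
  refine tprod_even_mul_odd (f := fun k => 1 - x * p ^ k) ?_ ?_
  · simpa only [even] using multipliable_one_sub_mul_pow x hp2
  · simpa only [odd] using multipliable_one_sub_mul_pow (x * p) hp2

lemma qPochhammer_mul_qPochhammer_neg (x : ℂ) (hp : ‖p‖ < 1) :
    qPochhammer x p * qPochhammer (-x) p = qPochhammer (x ^ 2) (p ^ 2) := by
  rw [qPochhammer, qPochhammer, qPochhammer,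
    ← (multipliable_one_sub_mul_pow x hp).tprod_mul (multipliable_one_sub_mul_pow (-x) hp)]
  exact tprod_congr fun k => by ring

lemma eulerFunction_eq_tprod (q : ℂ) : eulerFunction q = ∏' k : ℕ, (1 - q ^ (k + 1)) :=
  tprod_congr fun k => by rw [pow_succ']

lemma eulerFunction_zero : eulerFunction 0 = 1 := by simp [eulerFunction, qPochhammer]

lemma eulerFunction_ne_zero (hq : ‖q‖ < 1) : eulerFunction q ≠ 0 := qPochhammer_ne_zero hq hq

lemma analyticAt_eulerFunction (hq : ‖q‖ < 1) : AnalyticAt ℂ eulerFunction q := by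
  rw [funext eulerFunction_eq_tprod]
  exact ModularForm.differentiableOn_tprod_one_sub_pow.analyticAt
    (isOpen_ball.mem_nhds (by simpa using hq))

lemma qPochhammer_self_sq_mul_eulerFunction (hq : ‖q‖ < 1) :
    qPochhammer q (q ^ 2) * eulerFunction (q ^ 2) = eulerFunction q := by
  rw [eulerFunction, eulerFunction, ← qPochhammer_sq_mul q hq, ← sq]

lemma eulerFunction_mul_qPochhammer_neg (hq : ‖q‖ < 1) :
    eulerFunction q * qPochhammer (-q) q = eulerFunction (q ^ 2) :=
  qPochhammer_mul_qPochhammer_neg q hq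

end QPochhammer

section TripleProduct

section Gaussian

variable {K : Type*} [Field K] {p : K}

/-- The finite `q`-Pochhammer symbol `(p; p)_m = ∏_{k=1}^m (1 - pᵏ)`. -/
def qFactorial (p : K) (m : ℕ) : K := ∏ k ∈ Finset.range m, (1 - p ^ (k + 1))

/-- The reciprocal `1 / (p; p)_m`, extended by `0` to negative `m`. -/
def qFactorialInv (p : K) (m : ℤ) : K := if m < 0 then 0 else (qFactorial p m.toNat)⁻¹

/-- The central Gaussian binomial coefficient `[2n choose n + j]_p`, for all integers `j`. -/
def centralGaussBinom (p : K) (n : ℕ) (j : ℤ) : K :=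
  qFactorial p (2 * n) * qFactorialInv p (n + j) * qFactorialInv p (n - j)

lemma qFactorialInv_sub_one (hp : ∀ k : ℕ, 1 - p ^ (k + 1) ≠ 0) (m : ℤ) :
    qFactorialInv p (m - 1) = (1 - p ^ m) * qFactorialInv p m := by
  rcases lt_trichotomy m 0 with hm | rfl | hm
  · simp only [qFactorialInv, hm, (by lia : m - 1 < 0), if_true, mul_zero]
  · simp [qFactorialInv]
  · obtain ⟨k, rfl⟩ : ∃ k : ℕ, m = k + 1 := ⟨(m - 1).toNat, by lia⟩
    rw [qFactorialInv, qFactorialInv, if_neg (by lia), if_neg (by lia),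
      (by lia : ((k : ℤ) + 1 - 1).toNat = k), (by lia : ((k : ℤ) + 1).toNat = k + 1), qFactorial,
      qFactorial, Finset.prod_range_succ, mul_inv_rev,
      (by norm_cast : p ^ ((k : ℤ) + 1) = p ^ (k + 1)), mul_inv_cancel_left₀ (hp k)]

lemma centralGaussBinom_zero_left (j : ℤ) :
    centralGaussBinom p 0 j = if j = 0 then 1 else 0 := by
  rcases lt_trichotomy j 0 with hj | rfl | hj
  · simp [centralGaussBinom, qFactorialInv, hj, hj.ne]
  · simp [centralGaussBinom, qFactorialInv, qFactorial]
  · simp [centralGaussBinom, qFactorialInv, hj, hj.ne']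

lemma centralGaussBinom_succ (hp0 : p ≠ 0) (hp : ∀ k : ℕ, 1 - p ^ (k + 1) ≠ 0) (n : ℕ) (j : ℤ) :
    centralGaussBinom p (n + 1) j = (1 + p ^ (2 * n + 1)) * centralGaussBinom p n j
      + p ^ (n + 1 - j) * centralGaussBinom p n (j - 1)
      + p ^ (n + 1 + j) * centralGaussBinom p n (j + 1) := by
  have fact : qFactorial p (2 * (n + 1))
      = qFactorial p (2 * n) * (1 - p ^ (2 * n + 1)) * (1 - p ^ (2 * n + 1) * p) := by
    rw [mul_add_one, qFactorial, Finset.prod_range_succ, Finset.prod_range_succ, ← qFactorial,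
      pow_succ p (2 * n + 1)]
  have up : qFactorialInv p (n + j) = (1 - p ^ (n + 1 + j)) * qFactorialInv p (n + 1 + j) := by
    rw [← qFactorialInv_sub_one hp]; ring_nf
  have down : qFactorialInv p (n - j) = (1 - p ^ (n + 1 - j)) * qFactorialInv p (n + 1 - j) := by
    rw [← qFactorialInv_sub_one hp]; ring_nf
  have up' : qFactorialInv p (n + (j - 1))
      = (1 - p ^ (n + 1 + j) / p) * qFactorialInv p (n + j) := by
    rw [div_eq_mul_inv, ← zpow_sub_one₀ hp0, (by ring : (n + 1 + j : ℤ) - 1 = n + j),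
      ← qFactorialInv_sub_one hp, add_sub_assoc]
  have down' : qFactorialInv p (n - (j + 1))
      = (1 - p ^ (n + 1 - j) / p) * qFactorialInv p (n - j) := by
    rw [div_eq_mul_inv, ← zpow_sub_one₀ hp0, (by ring : (n + 1 - j : ℤ) - 1 = n - j),
      ← qFactorialInv_sub_one hp, sub_sub]
  have hprod : p ^ (2 * n + 1) * p = p ^ (n + 1 + j) * p ^ (n + 1 - j) := by
    rw [← zpow_add₀ hp0, ← pow_succ, ← zpow_natCast]; push_cast; ring_nf
  simp only [centralGaussBinom, fact, up', down', up, down, Nat.cast_add, Nat.cast_one,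
    (by ring : (n : ℤ) - (j - 1) = n + 1 - j), (by ring : (n : ℤ) + (j + 1) = n + 1 + j)]
  rw [hprod, eq_div_of_mul_eq hp0 hprod]
  field_simp
  ring

end Gaussian

variable {q x : ℂ}

lemma tripleProduct_term_succ (hq : ‖q‖ < 1) (hq0 : q ≠ 0) (hx : x ≠ 0) (n : ℕ) (j : ℤ) :
    q ^ (j ^ 2) * x ^ j * centralGaussBinom (q ^ 2) (n + 1) j
      = (1 + (q ^ (2 * n + 1)) ^ 2) * (q ^ (j ^ 2) * x ^ j * centralGaussBinom (q ^ 2) n j)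
        + q ^ (2 * n + 1) * x
          * (q ^ ((j - 1) ^ 2) * x ^ (j - 1) * centralGaussBinom (q ^ 2) n (j - 1))
        + q ^ (2 * n + 1) * x⁻¹
          * (q ^ ((j + 1) ^ 2) * x ^ (j + 1) * centralGaussBinom (q ^ 2) n (j + 1)) := by
  have hp (k : ℕ) : 1 - (q ^ 2) ^ (k + 1) ≠ 0 := one_sub_ne_zero_of_norm_lt_one
    (norm_pow_lt_one (norm_pow_lt_one hq two_ne_zero) k.succ_ne_zero)
  have power_sub : (q ^ 2) ^ ((n : ℤ) + 1 - j) * q ^ (j ^ 2) * x ^ j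
      = q ^ (2 * n + 1) * x * (q ^ ((j - 1) ^ 2) * x ^ (j - 1)) := by
    rw [zpow_sub_one₀ hx, ← zpow_natCast q 2, ← zpow_mul, ← zpow_add₀ hq0,
      ← zpow_natCast q (2 * n + 1)]
    field_simp
    rw [← zpow_add₀ hq0]
    push_cast
    ring_nf
  have power_add : (q ^ 2) ^ ((n : ℤ) + 1 + j) * q ^ (j ^ 2) * x ^ j
      = q ^ (2 * n + 1) * x⁻¹ * (q ^ ((j + 1) ^ 2) * x ^ (j + 1)) := by
    rw [zpow_add_one₀ hx, ← zpow_natCast q 2, ← zpow_mul, ← zpow_add₀ hq0,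
      ← zpow_natCast q (2 * n + 1)]
    field_simp
    rw [← zpow_add₀ hq0]
    push_cast
    ring_nf
  rw [centralGaussBinom_succ (pow_ne_zero 2 hq0) hp]
  linear_combination centralGaussBinom (q ^ 2) n (j - 1) * power_sub
    + centralGaussBinom (q ^ 2) n (j + 1) * power_add

lemma hasSum_finite_tripleProduct (hq : ‖q‖ < 1) (hq0 : q ≠ 0) (hx : x ≠ 0) (n : ℕ) :
    HasSum (fun j : ℤ => q ^ (j ^ 2) * x ^ j * centralGaussBinom (q ^ 2) n j)
      (∏ k ∈ Finset.range n, ((1 + x * q ^ (2 * k + 1)) * (1 + x⁻¹ * q ^ (2 * k + 1)))) := by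
  induction n with
  | zero =>
    convert hasSum_single (0 : ℤ) fun j hj => ?_ using 1
    · simp [centralGaussBinom_zero_left]
    · simp [centralGaussBinom_zero_left, hj]
  | succ n ih =>
    have shift_sub := (Equiv.subRight (1 : ℤ)).hasSum_iff.mpr ih
    have shift_add := (Equiv.addRight (1 : ℤ)).hasSum_iff.mpr ih
    have step := ((ih.mul_left (1 + (q ^ (2 * n + 1)) ^ 2)).add
      (shift_sub.mul_left (q ^ (2 * n + 1) * x))).add (shift_add.mul_left (q ^ (2 * n + 1) * x⁻¹))
    have factor (P : ℂ) : P * ((1 + x * q ^ (2 * n + 1)) * (1 + x⁻¹ * q ^ (2 * n + 1)))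
        = (1 + (q ^ (2 * n + 1)) ^ 2) * P + q ^ (2 * n + 1) * x * P
          + q ^ (2 * n + 1) * x⁻¹ * P := by
      field_simp
      ring
    rw [funext (tripleProduct_term_succ hq hq0 hx n), Finset.prod_range_succ, factor]
    exact step

lemma tendsto_qFactorial {p : ℂ} (hp : ‖p‖ < 1) :
    Tendsto (qFactorial p) atTop (𝓝 (eulerFunction p)) := by
  refine (tendsto_prod_qPochhammer p hp).congr fun n => ?_
  simp only [qFactorial, pow_succ']

lemma tendsto_qFactorialInv {p : ℂ} (hp : ‖p‖ < 1) :
    Tendsto (qFactorialInv p) atTop (𝓝 (eulerFunction p)⁻¹) := by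
  have toNat_atTop : Tendsto Int.toNat atTop atTop :=
    tendsto_atTop.mpr fun b => (eventually_ge_atTop (b : ℤ)).mono fun m hm => by lia
  refine (((tendsto_qFactorial hp).inv₀ (eulerFunction_ne_zero hp)).comp toNat_atTop).congr' ?_
  filter_upwards [eventually_ge_atTop (0 : ℤ)] with m hm
  simp only [Function.comp, qFactorialInv, not_lt.mpr hm, if_false]

lemma tendsto_centralGaussBinom {p : ℂ} (hp : ‖p‖ < 1) (j : ℤ) :
    Tendsto (centralGaussBinom p · j) atTop (𝓝 (eulerFunction p)⁻¹) := by
  have two_mul_atTop : Tendsto (fun n : ℕ => 2 * n) atTop atTop :=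
    tendsto_id.const_mul_atTop' two_pos
  have add_atTop (i : ℤ) : Tendsto (fun n : ℕ => (n : ℤ) + i) atTop atTop :=
    tendsto_atTop_add_const_right _ _ tendsto_natCast_atTop_atTop
  have lim := (((tendsto_qFactorial hp).comp two_mul_atTop).mul
    ((tendsto_qFactorialInv hp).comp (add_atTop j))).mul
    ((tendsto_qFactorialInv hp).comp (add_atTop (-j)))
  rwa [mul_inv_cancel₀ (eulerFunction_ne_zero hp), one_mul] at lim

lemma exists_norm_centralGaussBinom_le {p : ℂ} (hp : ‖p‖ < 1) :
    ∃ C, ∀ n j, ‖centralGaussBinom p n j‖ ≤ C := by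
  have lim := tendsto_qFactorial hp
  obtain ⟨C, hC⟩ := (isBounded_range_of_tendsto _ lim).exists_norm_le
  obtain ⟨D, hD⟩ := (isBounded_range_of_tendsto _
    (lim.inv₀ (eulerFunction_ne_zero hp))).exists_norm_le
  have hD0 : 0 ≤ D := (norm_nonneg _).trans (hD _ ⟨0, rfl⟩)
  have inv_le (m : ℤ) : ‖qFactorialInv p m‖ ≤ D := by
    unfold qFactorialInv
    split_ifs
    · simpa only [norm_zero] using hD0
    · exact hD _ ⟨m.toNat, rfl⟩
  refine ⟨C * D * D, fun n j => ?_⟩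
  rw [centralGaussBinom, norm_mul, norm_mul]
  have hC0 : 0 ≤ C := (norm_nonneg _).trans (hC _ ⟨0, rfl⟩)
  exact mul_le_mul (mul_le_mul (hC _ ⟨2 * n, rfl⟩) (inv_le _) (norm_nonneg _) hC0) (inv_le _)
    (norm_nonneg _) (by positivity)

lemma summable_norm_zpow_sq_mul_zpow (hq : ‖q‖ < 1) (hq0 : q ≠ 0) (hx : x ≠ 0) :
    Summable fun j : ℤ => ‖q ^ (j ^ 2) * x ^ j‖ := by
  have term_eq (j : ℤ) : jacobiTheta₂_term j (log x / (2 * π * I)) (log q / (π * I))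
      = q ^ (j ^ 2) * x ^ j := by
    have hπ : (π : ℂ) ≠ 0 := ofReal_ne_zero.mpr pi_ne_zero
    nth_rewrite 2 [← exp_log hq0, ← exp_log hx]
    rw [jacobiTheta₂_term, ← exp_int_mul, ← exp_int_mul, ← Complex.exp_add]
    congr 1
    push_cast
    field_simp
    ring
  simp only [← term_eq]
  refine ((summable_jacobiTheta₂_term_iff _ _).mpr ?_).norm
  have hlog : Real.log ‖q‖ < 0 := Real.log_neg (norm_pos_iff.mpr hq0) hq
  rw [← div_div, div_I, neg_im, mul_I_im, div_ofReal_re, log_re, ← neg_div]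
  exact div_pos (neg_pos.mpr hlog) pi_pos

theorem hasSum_tripleProduct (hq : ‖q‖ < 1) (hq0 : q ≠ 0) (hx : x ≠ 0) :
    HasSum (fun j : ℤ => q ^ (j ^ 2) * x ^ j)
      (eulerFunction (q ^ 2)
        * (qPochhammer (-(x * q)) (q ^ 2) * qPochhammer (-(x⁻¹ * q)) (q ^ 2))) := by
  have hq2 := norm_pow_lt_one hq two_ne_zero
  have hs := summable_norm_zpow_sq_mul_zpow hq hq0 hx
  obtain ⟨C, hC⟩ := exists_norm_centralGaussBinom_le hq2
  have sum_lim : Tendsto (fun n => ∑' j : ℤ, q ^ (j ^ 2) * x ^ j * centralGaussBinom (q ^ 2) n j)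
      atTop (𝓝 (∑' j : ℤ, q ^ (j ^ 2) * x ^ j * (eulerFunction (q ^ 2))⁻¹)) := by
    refine tendsto_tsum_of_dominated_convergence (hs.mul_right C)
      (fun j => (tendsto_centralGaussBinom hq2 j).const_mul _) (.of_forall fun n j => ?_)
    rw [norm_mul]
    exact mul_le_mul_of_nonneg_left (hC n j) (norm_nonneg _)
  have prod_lim := (tendsto_prod_qPochhammer (-(x * q)) hq2).mul
    (tendsto_prod_qPochhammer (-(x⁻¹ * q)) hq2)
  have key := tendsto_nhds_unique sum_lim <| prod_lim.congr fun n => by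
    rw [(hasSum_finite_tripleProduct hq hq0 hx n).tsum_eq, ← Finset.prod_mul_distrib]
    exact Finset.prod_congr rfl fun k _ => by ring
  rw [← key, tsum_mul_right, mul_comm, inv_mul_cancel_right₀ (eulerFunction_ne_zero hq2)]
  exact hs.of_norm.hasSum

end TripleProduct

section Theta

variable {q : ℂ}

/-- Jacobi's theta function `θ₄(q) = ∑ (-1)ʲ q^(j²)`, encoded by its product expansion. -/
noncomputable def thetaFour (q : ℂ) : ℂ := eulerFunction q ^ 2 / eulerFunction (q ^ 2)

/-- Jacobi's theta function `θ₃(q) = ∑ q^(j²)`. -/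
noncomputable def thetaThree (q : ℂ) : ℂ := thetaFour (-q)

/-- Ramanujan's theta function `ψ(q) = ∑_{j ≥ 0} q^(j(j+1)/2)`, encoded by its product expansion;
Jacobi's `θ₂(q)` is `2 q^(1/4) ψ(q²)`. -/
noncomputable def ramanujanPsi (q : ℂ) : ℂ := eulerFunction (q ^ 2) ^ 2 / eulerFunction q

lemma thetaThree_eq (q : ℂ) : thetaThree q = eulerFunction (-q) ^ 2 / eulerFunction (q ^ 2) := by
  rw [thetaThree, thetaFour, neg_sq]

lemma thetaThree_neg (q : ℂ) : thetaThree (-q) = thetaFour q := by rw [thetaThree, neg_neg]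

lemma eulerFunction_neg_mul (hq : ‖q‖ < 1) :
    eulerFunction (-q) * (eulerFunction q * eulerFunction (q ^ 4)) = eulerFunction (q ^ 2) ^ 3 := by
  have hq2 := norm_pow_lt_one hq two_ne_zero
  have pos := qPochhammer_self_sq_mul_eulerFunction hq
  have neg := qPochhammer_self_sq_mul_eulerFunction (by rwa [norm_neg] : ‖-q‖ < 1)
  have sq := qPochhammer_self_sq_mul_eulerFunction hq2
  rw [neg_sq] at neg
  rw [← qPochhammer_mul_qPochhammer_neg q hq2, ← pow_mul] at sq
  linear_combination -(qPochhammer q (q ^ 2)) * eulerFunction (q ^ 2) * eulerFunction (q ^ 4) * neg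
    - eulerFunction (-q) * eulerFunction (q ^ 4) * pos + eulerFunction (q ^ 2) ^ 2 * sq

lemma eulerFunction_neg (hq : ‖q‖ < 1) :
    eulerFunction (-q) = eulerFunction (q ^ 2) ^ 3 / (eulerFunction q * eulerFunction (q ^ 4)) :=
  eq_div_of_mul_eq (mul_ne_zero (eulerFunction_ne_zero hq)
    (eulerFunction_ne_zero (norm_pow_lt_one hq four_ne_zero))) (eulerFunction_neg_mul hq)

lemma thetaFour_ne_zero (hq : ‖q‖ < 1) : thetaFour q ≠ 0 :=
  div_ne_zero (pow_ne_zero 2 (eulerFunction_ne_zero hq))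
    (eulerFunction_ne_zero (norm_pow_lt_one hq two_ne_zero))

lemma thetaThree_ne_zero (hq : ‖q‖ < 1) : thetaThree q ≠ 0 :=
  thetaFour_ne_zero (by rwa [norm_neg])

lemma thetaThree_mul_thetaFour (hq : ‖q‖ < 1) :
    thetaThree q * thetaFour q = thetaFour (q ^ 2) ^ 2 := by
  have h1 := eulerFunction_ne_zero hq
  have h2 := eulerFunction_ne_zero (norm_pow_lt_one hq two_ne_zero)
  have h4 := eulerFunction_ne_zero (norm_pow_lt_one hq four_ne_zero)
  rw [thetaThree_eq, eulerFunction_neg hq, thetaFour, thetaFour, ← pow_mul]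
  field_simp

lemma ramanujanPsi_sq_mul_thetaThree (hq : ‖q‖ < 1) :
    ramanujanPsi (q ^ 2) * thetaThree q = ramanujanPsi q ^ 2 := by
  have h1 := eulerFunction_ne_zero hq
  have h2 := eulerFunction_ne_zero (norm_pow_lt_one hq two_ne_zero)
  have h4 := eulerFunction_ne_zero (norm_pow_lt_one hq four_ne_zero)
  rw [thetaThree_eq, eulerFunction_neg hq, ramanujanPsi, ramanujanPsi, ← pow_mul]
  field_simp

lemma hasSum_thetaThree (hq : ‖q‖ < 1) (hq0 : q ≠ 0) :
    HasSum (fun j : ℤ => q ^ (j ^ 2)) (thetaThree q) := by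
  have hq2 := eulerFunction_ne_zero (norm_pow_lt_one hq two_ne_zero)
  have product := qPochhammer_self_sq_mul_eulerFunction (by rwa [norm_neg] : ‖-q‖ < 1)
  have triple := hasSum_tripleProduct hq hq0 one_ne_zero
  simp only [one_zpow, mul_one, inv_one, one_mul] at triple
  convert triple using 1
  rw [thetaThree_eq, ← product, neg_sq]
  field_simp

lemma hasSum_two_mul_ramanujanPsi (hq : ‖q‖ < 1) (hq0 : q ≠ 0) :
    HasSum (fun j : ℤ => q ^ (j ^ 2 + j)) (2 * ramanujanPsi (q ^ 2)) := by
  have hq2 := norm_pow_lt_one hq two_ne_zero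
  have product := eulerFunction_mul_qPochhammer_neg hq2
  have triple := hasSum_tripleProduct hq hq0 hq0
  simp only [← zpow_add₀ hq0] at triple
  convert triple using 1
  rw [inv_mul_cancel₀ hq0, qPochhammer_eq_one_sub_mul (-1) hq2, ramanujanPsi, ← product]
  have := eulerFunction_ne_zero hq2
  field_simp
  ring_nf

lemma hasSum_int_of_even_odd {M : Type*} [AddCommMonoid M] [TopologicalSpace M] [ContinuousAdd M]
    {f : ℤ → M} {a b : M} (even : HasSum (fun j => f (2 * j)) a)
    (odd : HasSum (fun j => f (2 * j + 1)) b) : HasSum f (a + b) := by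
  have even_inj : Function.Injective fun j : ℤ => 2 * j := fun i j h => by simpa using h
  have odd_inj : Function.Injective fun j : ℤ => 2 * j + 1 := fun i j h => by simpa using h
  have even_range : (Set.range fun j : ℤ => 2 * j) = {j | Even j} :=
    Set.ext fun j => by
      simp only [Set.mem_range, Set.mem_ofPred_eq, even_iff_exists_two_mul, eq_comm]
  have odd_range : (Set.range fun j : ℤ => 2 * j + 1) = {j | Odd j} :=
    Set.ext fun j => by simp only [Set.mem_range, Set.mem_ofPred_eq, Odd, eq_comm]
  refine HasSum.add_isCompl ?_ (even_inj.hasSum_range_iff.mpr even)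
    (odd_inj.hasSum_range_iff.mpr odd)
  rw [even_range, odd_range]
  exact Int.isCompl_even_odd

/-- Splitting `∑ q^(j²)` according to the parity of `j`. -/
lemma thetaThree_eq_add (hq : ‖q‖ < 1) :
    thetaThree q = thetaThree (q ^ 4) + 2 * q * ramanujanPsi (q ^ 8) := by
  obtain rfl | hq0 := eq_or_ne q 0
  · simp [thetaThree, thetaFour]
  have hq4 := norm_pow_lt_one hq four_ne_zero
  have even_term (j : ℤ) : q ^ ((2 * j) ^ 2) = (q ^ 4) ^ (j ^ 2) := by
    rw [mul_pow, zpow_mul]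
    norm_cast
  have odd_term (j : ℤ) : q ^ ((2 * j + 1) ^ 2) = q * (q ^ 4) ^ (j ^ 2 + j) := by
    rw [← zpow_natCast q 4, ← zpow_mul, ← zpow_one_add₀ hq0]
    push_cast
    ring_nf
  have odd_sum := (hasSum_two_mul_ramanujanPsi hq4 (pow_ne_zero 4 hq0)).mul_left q
  rw [← pow_mul, mul_left_comm, ← mul_assoc] at odd_sum
  refine (hasSum_thetaThree hq hq0).unique (hasSum_int_of_even_odd ?_ ?_)
  · simpa only [even_term] using hasSum_thetaThree hq4 (pow_ne_zero 4 hq0)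
  · simpa only [odd_term] using odd_sum

lemma thetaFour_eq_sub (hq : ‖q‖ < 1) :
    thetaFour q = thetaThree (q ^ 4) - 2 * q * ramanujanPsi (q ^ 8) := by
  have split := thetaThree_eq_add (by rwa [norm_neg] : ‖-q‖ < 1)
  rw [thetaThree_neg, Even.neg_pow (by decide), Even.neg_pow (by decide)] at split
  rw [split]
  ring

lemma thetaThree_sq_add_thetaFour_sq (hq : ‖q‖ < 1) :
    thetaThree q ^ 2 + thetaFour q ^ 2 = 2 * thetaThree (q ^ 2) ^ 2 := by
  have hIq : ‖I * q‖ < 1 := by simpa using hq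
  have product := thetaThree_mul_thetaFour hIq
  rw [thetaThree_eq_add hIq, thetaFour_eq_sub hIq, mul_pow, mul_pow, mul_pow, I_sq, neg_one_mul,
    ← thetaThree_neg, neg_neg, I_pow_four, one_mul, (by norm_num : 8 = 4 * 2), pow_mul I,
    I_pow_four, one_pow, one_mul] at product
  rw [thetaThree_eq_add hq, thetaFour_eq_sub hq]
  linear_combination 2 * product + 8 * q ^ 2 * ramanujanPsi (q ^ 8) ^ 2 * I_sq

lemma thetaThree_sq_sub_thetaFour_sq (hq : ‖q‖ < 1) :
    thetaThree q ^ 2 - thetaFour q ^ 2 = 8 * q * ramanujanPsi (q ^ 4) ^ 2 := by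
  have product := ramanujanPsi_sq_mul_thetaThree (norm_pow_lt_one hq four_ne_zero)
  rw [← pow_mul] at product
  rw [thetaThree_eq_add hq, thetaFour_eq_sub hq, ← product]
  ring

lemma thetaThree_pow_four_sub_thetaFour_pow_four (hq : ‖q‖ < 1) :
    thetaThree q ^ 4 - thetaFour q ^ 4 = 16 * q * ramanujanPsi (q ^ 2) ^ 4 := by
  have product := ramanujanPsi_sq_mul_thetaThree (norm_pow_lt_one hq two_ne_zero)
  rw [← pow_mul] at product
  calc thetaThree q ^ 4 - thetaFour q ^ 4
      = (thetaThree q ^ 2 + thetaFour q ^ 2) * (thetaThree q ^ 2 - thetaFour q ^ 2) := by ring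
    _ = 16 * q * (ramanujanPsi (q ^ 4) * thetaThree (q ^ 2)) ^ 2 := by
      rw [thetaThree_sq_add_thetaFour_sq hq, thetaThree_sq_sub_thetaFour_sq hq]
      ring
    _ = 16 * q * ramanujanPsi (q ^ 2) ^ 4 := by
      rw [product]
      ring

end Theta

section Hauptmodul

variable {q : ℂ}

/-- The modular function `-64 (η(2τ)/η(τ))²⁴` in the variable `q = exp(2πiτ)`: the argument at
which the hypergeometric series is evaluated. -/
noncomputable def hauptmodul (q : ℂ) : ℂ :=
  -64 * q * (eulerFunction (q ^ 2) / eulerFunction q) ^ 24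

/-- The weight two form `2 θ₃⁴ - θ₄⁴`; it is the logarithmic derivative `q d/dq` of `hauptmodul`. -/
noncomputable def thetaQuartic (q : ℂ) : ℂ := 2 * thetaThree q ^ 4 - thetaFour q ^ 4

lemma eulerFunction_sq_pow_four_mul_thetaQuartic (hq : ‖q‖ < 1) :
    eulerFunction (q ^ 2) ^ 4 * thetaQuartic q
      = eulerFunction q ^ 8 + 32 * q * eulerFunction (q ^ 4) ^ 8 := by
  have h2 := eulerFunction_ne_zero (norm_pow_lt_one hq two_ne_zero)
  have quartic : thetaQuartic q = thetaFour q ^ 4 + 2 * (16 * q * ramanujanPsi (q ^ 2) ^ 4) := by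
    rw [thetaQuartic, ← thetaThree_pow_four_sub_thetaFour_pow_four hq]
    ring
  rw [quartic, thetaFour, ramanujanPsi, ← pow_mul]
  field_simp
  ring

lemma hauptmodul_mul_thetaFour_pow_eight (hq : ‖q‖ < 1) :
    hauptmodul q * thetaFour q ^ 8
      = -4 * thetaThree q ^ 4 * (thetaThree q ^ 4 - thetaFour q ^ 4) := by
  have h1 := eulerFunction_ne_zero hq
  have h2 := eulerFunction_ne_zero (norm_pow_lt_one hq two_ne_zero)
  have h4 := eulerFunction_ne_zero (norm_pow_lt_one hq four_ne_zero)
  rw [thetaThree_pow_four_sub_thetaFour_pow_four hq, hauptmodul, thetaThree_eq,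
    eulerFunction_neg hq, thetaFour, ramanujanPsi, ← pow_mul]
  field_simp
  ring

lemma thetaQuartic_sq (hq : ‖q‖ < 1) :
    thetaQuartic q ^ 2 = thetaFour q ^ 8 * (1 - hauptmodul q) := by
  rw [thetaQuartic]
  linear_combination hauptmodul_mul_thetaFour_pow_eight hq

end Hauptmodul

section Inversion

variable {τ : ℂ}

lemma qParam_one_nat_mul (n : ℕ) (τ : ℂ) : qParam 1 (n * τ) = qParam 1 τ ^ n := by
  rw [qParam, qParam, ← Complex.exp_nat_mul]
  ring_nf

lemma norm_qParam_one_lt_one (hτ : 0 < τ.im) : ‖qParam 1 τ‖ < 1 :=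
  Function.Periodic.norm_qParam_lt_one one_pos hτ

lemma dedekindEta_eq_exp_mul_eulerFunction (τ : ℂ) :
    dedekindEta τ = cexp (π * I * τ / 12) * eulerFunction (qParam 1 τ) := by
  simp only [dedekindEta, eulerFunction_eq_tprod, ← ModularForm.eta_q_eq_cexp]

lemma dedekindEta_eq_eta : dedekindEta = ModularForm.eta := by
  funext τ
  have exp_eq : cexp (π * I * τ / 12) = qParam 24 τ := by
    rw [qParam]
    push_cast
    ring_nf
  rw [dedekindEta_eq_exp_mul_eulerFunction, ModularForm.eta, eulerFunction_eq_tprod, exp_eq]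

lemma dedekindEta_ne_zero (hτ : 0 < τ.im) : dedekindEta τ ≠ 0 :=
  dedekindEta_eq_eta ▸ ModularForm.eta_ne_zero hτ

lemma dedekindEta_neg_one_div_pow_four (hτ : 0 < τ.im) :
    dedekindEta (-1 / τ) ^ 4 = -τ ^ 2 * dedekindEta τ ^ 4 := by
  have inversion := ModularForm.eta_comp_eq_csqrt_I_inv hτ
  have sqrt_pow_four (z : ℂ) : Complex.sqrt z ^ 4 = z ^ 2 := by
    rw [(by norm_num : 4 = 2 * 2), pow_mul, Complex.sqrt, ← Nat.cast_two,
      Complex.cpow_nat_inv_pow z two_ne_zero]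
  simp only [Function.comp, Pi.smul_apply, Pi.mul_apply, smul_eq_mul] at inversion
  rw [dedekindEta_eq_eta, inversion, mul_pow, mul_pow, inv_pow, sqrt_pow_four, sqrt_pow_four, I_sq]
  ring

lemma dedekindEta_nat_mul (n : ℕ) (τ : ℂ) :
    dedekindEta (n * τ) = cexp (π * I * τ / 12) ^ n * eulerFunction (qParam 1 τ ^ n) := by
  rw [dedekindEta_eq_exp_mul_eulerFunction, qParam_one_nat_mul, ← Complex.exp_nat_mul]
  ring_nf

lemma dedekindEta_two_mul (τ : ℂ) :
    dedekindEta (2 * τ) = cexp (π * I * τ / 12) ^ 2 * eulerFunction (qParam 1 τ ^ 2) :=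
  mod_cast dedekindEta_nat_mul 2 τ

lemma dedekindEta_four_mul (τ : ℂ) :
    dedekindEta (4 * τ) = cexp (π * I * τ / 12) ^ 4 * eulerFunction (qParam 1 τ ^ 4) :=
  mod_cast dedekindEta_nat_mul 4 τ

lemma qParam_one_eq_exp_pow (τ : ℂ) : qParam 1 τ = cexp (π * I * τ / 12) ^ 24 := by
  rw [qParam, ← Complex.exp_nat_mul]
  push_cast
  ring_nf

lemma thetaFour_qParam_pow_four (τ : ℂ) :
    thetaFour (qParam 1 τ) ^ 4 = dedekindEta τ ^ 8 / dedekindEta (2 * τ) ^ 4 := by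
  have := Complex.exp_ne_zero (π * I * τ / 12)
  rw [dedekindEta_two_mul, dedekindEta_eq_exp_mul_eulerFunction, thetaFour]
  field_simp

lemma hauptmodul_qParam (τ : ℂ) :
    hauptmodul (qParam 1 τ) = -64 * (dedekindEta (2 * τ) / dedekindEta τ) ^ 24 := by
  have := Complex.exp_ne_zero (π * I * τ / 12)
  rw [dedekindEta_two_mul, dedekindEta_eq_exp_mul_eulerFunction, hauptmodul]
  nth_rw 1 [qParam_one_eq_exp_pow]
  field_simp

lemma dedekindEta_pow_four_mul_thetaQuartic (hτ : 0 < τ.im) :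
    dedekindEta (2 * τ) ^ 4 * thetaQuartic (qParam 1 τ)
      = dedekindEta τ ^ 8 + 32 * dedekindEta (4 * τ) ^ 8 := by
  rw [dedekindEta_two_mul, dedekindEta_four_mul, dedekindEta_eq_exp_mul_eulerFunction]
  linear_combination cexp (π * I * τ / 12) ^ 8
      * eulerFunction_sq_pow_four_mul_thetaQuartic (norm_qParam_one_lt_one hτ)
    + 32 * cexp (π * I * τ / 12) ^ 8 * eulerFunction (qParam 1 τ ^ 4) ^ 8 * qParam_one_eq_exp_pow τ

lemma neg_one_div_two_mul_im_pos (hτ : 0 < τ.im) : 0 < (-1 / (2 * τ)).im := by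
  have : 0 < (2 * τ).im := by simpa using hτ
  rw [neg_div, one_div, neg_im, inv_im, neg_div, neg_neg]
  exact div_pos this (normSq_pos.mpr fun h => by simp [h] at this)

lemma dedekindEta_neg_one_div_two_mul_pow_four (hτ : 0 < τ.im) :
    dedekindEta (-1 / (2 * τ)) ^ 4 = -4 * τ ^ 2 * dedekindEta (2 * τ) ^ 4 := by
  rw [dedekindEta_neg_one_div_pow_four (by simpa using hτ)]
  ring

lemma dedekindEta_two_mul_neg_one_div_two_mul_pow_four (hτ : 0 < τ.im) :
    dedekindEta (2 * (-1 / (2 * τ))) ^ 4 = -τ ^ 2 * dedekindEta τ ^ 4 := by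
  rw [mul_div_assoc', mul_div_mul_left _ _ two_ne_zero, dedekindEta_neg_one_div_pow_four hτ]

lemma hauptmodul_mul_hauptmodul_inversion (hτ : 0 < τ.im) :
    hauptmodul (qParam 1 τ) * hauptmodul (qParam 1 (-1 / (2 * τ))) = 1 := by
  have h0 : τ ≠ 0 := by rintro rfl; simp at hτ
  have h1 := dedekindEta_ne_zero hτ
  have h2 := dedekindEta_ne_zero (by simpa using hτ : 0 < (2 * τ).im)
  have pow_split (x : ℂ) : x ^ 24 = (x ^ 4) ^ 6 := by ring
  rw [hauptmodul_qParam, hauptmodul_qParam, pow_split (_ / dedekindEta (-1 / (2 * τ))),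
    div_pow (dedekindEta (2 * (-1 / (2 * τ)))),
    dedekindEta_neg_one_div_two_mul_pow_four hτ,
    dedekindEta_two_mul_neg_one_div_two_mul_pow_four hτ]
  field_simp
  norm_num

lemma thetaFour_pow_four_mul_inversion_mul_thetaQuartic (hτ : 0 < τ.im) :
    thetaFour (qParam 1 τ) ^ 4 * thetaQuartic (qParam 1 τ)
        * thetaFour (qParam 1 (-1 / (2 * τ))) ^ 4
      = -16 * (τ ^ 2
        * (dedekindEta τ ^ 12 + 32 * dedekindEta τ ^ 4 * dedekindEta (4 * τ) ^ 8)) := by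
  have h0 : τ ≠ 0 := by rintro rfl; simp at hτ
  have h1 := dedekindEta_ne_zero hτ
  have h2 := dedekindEta_ne_zero (by simpa using hτ : 0 < (2 * τ).im)
  have quartic := dedekindEta_pow_four_mul_thetaQuartic hτ
  have pow_split (x : ℂ) : x ^ 8 = (x ^ 4) ^ 2 := by ring
  rw [thetaFour_qParam_pow_four, thetaFour_qParam_pow_four,
    pow_split (dedekindEta (-1 / (2 * τ))), dedekindEta_neg_one_div_two_mul_pow_four hτ,
    dedekindEta_two_mul_neg_one_div_two_mul_pow_four hτ]
  calc
    _ = -16 * τ ^ 2 * dedekindEta τ ^ 4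
        * (dedekindEta (2 * τ) ^ 4 * thetaQuartic (qParam 1 τ)) := by
      field_simp
      norm_num
    _ = _ := by
      rw [quartic]
      ring

end Inversion

/-- `f` is differentiable at `q` and the Euler operator `q d/dq` sends it to the value `v` there. -/
def HasEulerDerivAt (f : ℂ → ℂ) (v q : ℂ) : Prop := ∃ f', HasDerivAt f f' q ∧ q * f' = v

/-- The logarithmic derivative of `f` with respect to the Euler operator `q d/dq`. -/
noncomputable def eulerLogDeriv (f : ℂ → ℂ) (q : ℂ) : ℂ := q * logDeriv f q

namespace HasEulerDerivAt

variable {f g : ℂ → ℂ} {u v q : ℂ}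

lemma of_differentiableAt (hf : DifferentiableAt ℂ f q) (hfq : f q ≠ 0) :
    HasEulerDerivAt f (eulerLogDeriv f q * f q) q := by
  refine ⟨_, hf.hasDerivAt, ?_⟩
  rw [eulerLogDeriv, logDeriv_apply, mul_assoc, div_mul_cancel₀ _ hfq]

lemma congr_value (hf : HasEulerDerivAt f u q) (h : u = v) : HasEulerDerivAt f v q := h ▸ hf

lemma unique_of_eventuallyEq (hf : HasEulerDerivAt f u q) (hg : HasEulerDerivAt g v q)
    (h : f =ᶠ[𝓝 q] g) : u = v := by
  obtain ⟨f', hf', rfl⟩ := hf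
  obtain ⟨g', hg', rfl⟩ := hg
  rw [hf'.unique (hg'.congr_of_eventuallyEq h)]

lemma congr_of_eventuallyEq (hf : HasEulerDerivAt f u q) (h : g =ᶠ[𝓝 q] f) :
    HasEulerDerivAt g u q := by
  obtain ⟨f', hf', rfl⟩ := hf
  exact ⟨f', hf'.congr_of_eventuallyEq h, rfl⟩

lemma const_mul (c : ℂ) (hf : HasEulerDerivAt f u q) :
    HasEulerDerivAt (fun x => c * f x) (c * u) q := by
  obtain ⟨f', hf', rfl⟩ := hf
  exact ⟨_, hf'.const_mul c, by ring⟩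

lemma add (hf : HasEulerDerivAt f u q) (hg : HasEulerDerivAt g v q) :
    HasEulerDerivAt (fun x => f x + g x) (u + v) q := by
  obtain ⟨f', hf', rfl⟩ := hf
  obtain ⟨g', hg', rfl⟩ := hg
  exact ⟨_, hf'.add hg', by ring⟩

lemma sub (hf : HasEulerDerivAt f u q) (hg : HasEulerDerivAt g v q) :
    HasEulerDerivAt (fun x => f x - g x) (u - v) q := by
  obtain ⟨f', hf', rfl⟩ := hf
  obtain ⟨g', hg', rfl⟩ := hg
  exact ⟨_, hf'.sub hg', by ring⟩

lemma mul (hf : HasEulerDerivAt f u q) (hg : HasEulerDerivAt g v q) :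
    HasEulerDerivAt (fun x => f x * g x) (u * g q + f q * v) q := by
  obtain ⟨f', hf', rfl⟩ := hf
  obtain ⟨g', hg', rfl⟩ := hg
  exact ⟨_, hf'.mul hg', by ring⟩

lemma pow (n : ℕ) (hf : HasEulerDerivAt f (u * f q) q) :
    HasEulerDerivAt (fun x => f x ^ n) (n * u * f q ^ n) q := by
  obtain ⟨f', hf', hu⟩ := hf
  refine ⟨_, hf'.pow n, ?_⟩
  rw [mul_left_comm, hu]
  cases n with
  | zero => simp
  | succ n => rw [Nat.add_sub_cancel, pow_succ]; ring

lemma zpow (m : ℤ) (hfq : f q ≠ 0) (hf : HasEulerDerivAt f (u * f q) q) :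
    HasEulerDerivAt (fun x => f x ^ m) (m * u * f q ^ m) q := by
  obtain ⟨f', hf', hu⟩ := hf
  refine ⟨_, (hasDerivAt_zpow m _ (.inl hfq)).comp q hf', ?_⟩
  rw [mul_left_comm, hu, zpow_sub_one₀ hfq]
  field_simp

lemma div (hf : HasEulerDerivAt f u q) (hg : HasEulerDerivAt g (v * g q) q) (hgq : g q ≠ 0) :
    HasEulerDerivAt (fun x => f x / g x) ((u - f q * v) / g q) q := by
  obtain ⟨f', hf', rfl⟩ := hf
  obtain ⟨g', hg', hv⟩ := hg
  refine ⟨_, hf'.div hg' hgq, ?_⟩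
  field_simp
  linear_combination -f q * hv

lemma comp_sq (hf : HasEulerDerivAt f u (q ^ 2)) :
    HasEulerDerivAt (fun x => f (x ^ 2)) (2 * u) q := by
  obtain ⟨f', hf', rfl⟩ := hf
  refine ⟨_, hf'.comp q (hasDerivAt_pow 2 q), ?_⟩
  push_cast
  ring

end HasEulerDerivAt

lemma eq_zero_of_eq_two_pow_mul_comp_sq {f : ℂ → ℂ} {k : ℕ} {q : ℂ}
    (hf : DifferentiableAt ℂ f 0) (hf0 : f 0 = 0)
    (h : ∀ p, ‖p‖ < 1 → f p = 2 ^ k * f (p ^ 2)) (hq : ‖q‖ < 1) : f q = 0 := by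
  have iterate (n : ℕ) : ((2 ^ n : ℕ) : ℂ) ^ k * f (q ^ 2 ^ n) = f q := by
    induction n with
    | zero => simp
    | succ n ih =>
      rw [← ih, h (q ^ 2 ^ n) (norm_pow_lt_one hq (by positivity)), ← pow_mul, ← pow_succ]
      push_cast
      ring
  have f_isBigO : f =O[𝓝 0] fun p => p := by simpa [hf0] using hf.isBigO_sub
  have pow_lim : Tendsto (fun m : ℕ => (m : ℂ) ^ k * q ^ m) atTop (𝓝 0) := by
    rw [tendsto_zero_iff_norm_tendsto_zero]
    simpa only [norm_mul, norm_pow, Complex.norm_natCast]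
      using tendsto_pow_const_mul_const_pow_of_lt_one k (norm_nonneg q) hq
  have lim : Tendsto (fun m : ℕ => (m : ℂ) ^ k * f (q ^ m)) atTop (𝓝 0) :=
    ((Asymptotics.isBigO_refl _ _).mul
      (f_isBigO.comp_tendsto (tendsto_pow_atTop_nhds_zero_of_norm_lt_one hq))).trans_tendsto pow_lim
  refine tendsto_nhds_unique (tendsto_const_nhds.congr fun n => (iterate n).symm)
    (lim.comp (tendsto_pow_atTop_atTop_of_one_lt one_lt_two))

section DifferentialSystem

variable {q : ℂ}

lemma eventually_norm_lt_one (hq : ‖q‖ < 1) : ∀ᶠ p in 𝓝 q, ‖p‖ < 1 :=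
  continuous_norm.continuousAt.eventually_lt_const hq

lemma analyticAt_thetaFour (hq : ‖q‖ < 1) : AnalyticAt ℂ thetaFour q :=
  ((analyticAt_eulerFunction hq).pow 2).div
    ((analyticAt_eulerFunction (norm_pow_lt_one hq two_ne_zero)).comp_of_eq
      (analyticAt_id.pow 2) rfl)
    (eulerFunction_ne_zero (norm_pow_lt_one hq two_ne_zero))

lemma analyticAt_thetaThree (hq : ‖q‖ < 1) : AnalyticAt ℂ thetaThree q :=
  (analyticAt_thetaFour (by rwa [norm_neg])).comp_of_eq analyticAt_id.neg rfl

lemma hasEulerDerivAt_thetaFour (hq : ‖q‖ < 1) :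
    HasEulerDerivAt thetaFour (eulerLogDeriv thetaFour q * thetaFour q) q :=
  .of_differentiableAt (analyticAt_thetaFour hq).differentiableAt (thetaFour_ne_zero hq)

lemma hasEulerDerivAt_thetaThree (hq : ‖q‖ < 1) :
    HasEulerDerivAt thetaThree (eulerLogDeriv thetaThree q * thetaThree q) q :=
  .of_differentiableAt (analyticAt_thetaThree hq).differentiableAt (thetaThree_ne_zero hq)

lemma eulerLogDeriv_thetaThree_add_thetaFour (hq : ‖q‖ < 1) :
    eulerLogDeriv thetaThree q + eulerLogDeriv thetaFour q
      = 4 * eulerLogDeriv thetaFour (q ^ 2) := by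
  have deriv_eq := ((hasEulerDerivAt_thetaThree hq).mul
    (hasEulerDerivAt_thetaFour hq)).unique_of_eventuallyEq
    ((hasEulerDerivAt_thetaFour (norm_pow_lt_one hq two_ne_zero)).pow 2).comp_sq
    ((eventually_norm_lt_one hq).mono fun p hp => thetaThree_mul_thetaFour hp)
  rw [← thetaThree_mul_thetaFour hq] at deriv_eq
  refine mul_right_cancel₀ (mul_ne_zero (thetaThree_ne_zero hq) (thetaFour_ne_zero hq)) ?_
  push_cast at deriv_eq
  linear_combination deriv_eq

lemma thetaThree_sq_mul_eulerLogDeriv_add (hq : ‖q‖ < 1) :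
    thetaThree q ^ 2 * eulerLogDeriv thetaThree q + thetaFour q ^ 2 * eulerLogDeriv thetaFour q
      = 2 * (thetaThree q ^ 2 + thetaFour q ^ 2) * eulerLogDeriv thetaThree (q ^ 2) := by
  have deriv_eq := (((hasEulerDerivAt_thetaThree hq).pow 2).add
    ((hasEulerDerivAt_thetaFour hq).pow 2)).unique_of_eventuallyEq
    (((hasEulerDerivAt_thetaThree (norm_pow_lt_one hq two_ne_zero)).pow 2).comp_sq.const_mul 2)
    ((eventually_norm_lt_one hq).mono fun p hp => thetaThree_sq_add_thetaFour_sq hp)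
  push_cast at deriv_eq
  linear_combination deriv_eq / 2 - 2 * eulerLogDeriv thetaThree (q ^ 2)
    * thetaThree_sq_add_thetaFour_sq hq

lemma ramanujanPsi_ne_zero (hq : ‖q‖ < 1) : ramanujanPsi q ≠ 0 :=
  div_ne_zero (pow_ne_zero 2 (eulerFunction_ne_zero (norm_pow_lt_one hq two_ne_zero)))
    (eulerFunction_ne_zero hq)

lemma analyticAt_ramanujanPsi (hq : ‖q‖ < 1) : AnalyticAt ℂ ramanujanPsi q :=
  (((analyticAt_eulerFunction (norm_pow_lt_one hq two_ne_zero)).comp_of_eq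
    (analyticAt_id.pow 2) rfl).pow 2).div (analyticAt_eulerFunction hq) (eulerFunction_ne_zero hq)

lemma ramanujanPsi_zero : ramanujanPsi 0 = 1 := by simp [ramanujanPsi, eulerFunction_zero]

lemma thetaFour_zero : thetaFour 0 = 1 := by simp [thetaFour, eulerFunction_zero]

lemma thetaThree_zero : thetaThree 0 = 1 := by rw [thetaThree, neg_zero, thetaFour_zero]

lemma hasDerivAt_thetaThree_zero : HasDerivAt thetaThree 2 0 := by
  have zero_lt : ‖(0 : ℂ)‖ < 1 := by simp
  have even_part : HasDerivAt (fun q => thetaThree (q ^ 4)) 0 0 := by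
    have theta := (analyticAt_thetaThree zero_lt).differentiableAt.hasDerivAt
    rw [← zero_pow four_ne_zero] at theta
    simpa [Function.comp_def] using theta.comp 0 (hasDerivAt_pow 4 (0 : ℂ))
  have psi : HasDerivAt (fun q => ramanujanPsi (q ^ 8)) 0 0 := by
    have psi := (analyticAt_ramanujanPsi zero_lt).differentiableAt.hasDerivAt
    rw [← zero_pow (by norm_num : 8 ≠ 0)] at psi
    simpa [Function.comp_def] using psi.comp 0 (hasDerivAt_pow 8 (0 : ℂ))
  have split := even_part.add (((hasDerivAt_id (0 : ℂ)).const_mul 2).mul psi)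
  simp only [id, ne_eq, OfNat.ofNat_ne_zero, not_false_eq_true, zero_pow, ramanujanPsi_zero,
    mul_one, mul_zero, add_zero, zero_add] at split
  exact split.congr_of_eventuallyEq
    ((eventually_norm_lt_one zero_lt).mono fun p hp => thetaThree_eq_add hp)

lemma hasDerivAt_thetaFour_zero : HasDerivAt thetaFour (-2) 0 := by
  have theta := hasDerivAt_thetaThree_zero
  rw [← neg_zero] at theta
  simpa [Function.comp_def, thetaThree_neg] using theta.comp 0 (hasDerivAt_neg (0 : ℂ))

lemma eulerLogDeriv_zero (f : ℂ → ℂ) : eulerLogDeriv f 0 = 0 := zero_mul _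

lemma analyticAt_logDeriv {f : ℂ → ℂ} (hf : AnalyticAt ℂ f q) (hfq : f q ≠ 0) :
    AnalyticAt ℂ (logDeriv f) q :=
  hf.deriv.div hf hfq

lemma thetaThree_sq_mul_eulerLogDeriv_sub_comp_sq (hq : ‖q‖ < 1) :
    thetaThree (q ^ 2) ^ 2
        * (eulerLogDeriv thetaThree (q ^ 2) - eulerLogDeriv thetaFour (q ^ 2))
      = q * ramanujanPsi (q ^ 4) ^ 2
        * (eulerLogDeriv thetaThree q - eulerLogDeriv thetaFour q) := by
  have prod_rel := eulerLogDeriv_thetaThree_add_thetaFour hq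
  have sum_rel := thetaThree_sq_mul_eulerLogDeriv_add hq
  have theta_sum := thetaThree_sq_add_thetaFour_sq hq
  have theta_diff := thetaThree_sq_sub_thetaFour_sq hq
  linear_combination (-1 / 4) * sum_rel + thetaThree (q ^ 2) ^ 2 / 4 * prod_rel
    + (eulerLogDeriv thetaThree q + eulerLogDeriv thetaFour q) / 8 * theta_sum
    - eulerLogDeriv thetaThree (q ^ 2) / 2 * theta_sum
    + (eulerLogDeriv thetaThree q - eulerLogDeriv thetaFour q) / 8 * theta_diff

lemma logDeriv_thetaThree_sub_thetaFour_comp_sq (hq : ‖q‖ < 1) :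
    (logDeriv thetaThree (q ^ 2) - logDeriv thetaFour (q ^ 2)) * ramanujanPsi (q ^ 2) ^ 4
      = (logDeriv thetaThree q - logDeriv thetaFour q) * ramanujanPsi (q ^ 4) ^ 4 := by
  obtain rfl | hq0 := eq_or_ne q 0
  · rw [zero_pow two_ne_zero, zero_pow four_ne_zero]
  have scaled := thetaThree_sq_mul_eulerLogDeriv_sub_comp_sq hq
  have psi := ramanujanPsi_sq_mul_thetaThree (norm_pow_lt_one hq two_ne_zero)
  rw [← pow_mul] at psi
  simp only [eulerLogDeriv] at scaled
  refine mul_left_cancel₀ (pow_ne_zero 2 hq0) ?_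
  linear_combination ramanujanPsi (q ^ 4) ^ 2 * scaled
    - q ^ 2 * (logDeriv thetaThree (q ^ 2) - logDeriv thetaFour (q ^ 2))
      * (ramanujanPsi (q ^ 4) * thetaThree (q ^ 2) + ramanujanPsi (q ^ 2) ^ 2) * psi

/-- Both sides are multiplied by the same factor under `q ↦ q²`, so that their ratio is constant. -/
lemma eulerLogDeriv_thetaThree_sub_thetaFour (hq : ‖q‖ < 1) :
    eulerLogDeriv thetaThree q - eulerLogDeriv thetaFour q
      = (thetaThree q ^ 4 - thetaFour q ^ 4) / 4 := by
  have zero_lt : ‖(0 : ℂ)‖ < 1 := by simp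
  have psi_ne {p : ℂ} (hp : ‖p‖ < 1) : ramanujanPsi (p ^ 2) ≠ 0 :=
    ramanujanPsi_ne_zero (norm_pow_lt_one hp two_ne_zero)
  set ratio : ℂ → ℂ := fun p =>
    (logDeriv thetaThree p - logDeriv thetaFour p) / (4 * ramanujanPsi (p ^ 2) ^ 4)
  have ratio_zero : ratio 0 = 1 := by
    simp only [ratio, logDeriv_apply, hasDerivAt_thetaThree_zero.deriv,
      hasDerivAt_thetaFour_zero.deriv, thetaThree_zero, thetaFour_zero, zero_pow two_ne_zero,
      ramanujanPsi_zero]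
    norm_num
  have ratio_analyticAt : AnalyticAt ℂ ratio 0 :=
    ((analyticAt_logDeriv (analyticAt_thetaThree zero_lt) (thetaThree_ne_zero zero_lt)).sub
      (analyticAt_logDeriv (analyticAt_thetaFour zero_lt) (thetaFour_ne_zero zero_lt))).div
      (analyticAt_const.mul (((analyticAt_ramanujanPsi (norm_pow_lt_one zero_lt
        two_ne_zero)).comp_of_eq (analyticAt_id.pow 2) rfl).pow 4))
      (mul_ne_zero (by norm_num) (pow_ne_zero 4 (psi_ne zero_lt)))
  have ratio_sq (p : ℂ) (hp : ‖p‖ < 1) : ratio p = ratio (p ^ 2) := by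
    have psi_four := psi_ne (norm_pow_lt_one hp two_ne_zero)
    rw [← pow_mul] at psi_four
    simp only [ratio, ← pow_mul]
    rw [div_eq_div_iff (mul_ne_zero (by norm_num) (pow_ne_zero 4 (psi_ne hp)))
      (mul_ne_zero (by norm_num) (pow_ne_zero 4 psi_four))]
    linear_combination -4 * logDeriv_thetaThree_sub_thetaFour_comp_sq hp
  have ratio_eq := eq_zero_of_eq_two_pow_mul_comp_sq (f := fun p => ratio p - 1) (k := 0)
    (ratio_analyticAt.differentiableAt.sub_const 1) (by rw [ratio_zero, sub_self])
    (fun p hp => by rw [ratio_sq p hp, pow_zero, one_mul]) hq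
  rw [thetaThree_pow_four_sub_thetaFour_pow_four hq, eulerLogDeriv, eulerLogDeriv, ← mul_sub,
    (div_eq_one_iff_eq (mul_ne_zero (by norm_num) (pow_ne_zero 4 (psi_ne hq)))).mp
      (sub_eq_zero.mp ratio_eq)]
  ring

lemma analyticAt_eulerLogDeriv_thetaFour (hq : ‖q‖ < 1) :
    AnalyticAt ℂ (eulerLogDeriv thetaFour) q :=
  analyticAt_id.mul (analyticAt_logDeriv (analyticAt_thetaFour hq) (thetaFour_ne_zero hq))

lemma hasEulerDerivAt_thetaFour_pow_four (hq : ‖q‖ < 1) :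
    HasEulerDerivAt (fun p => thetaFour p ^ 4)
      (4 * eulerLogDeriv thetaFour q * thetaFour q ^ 4) q :=
  (hasEulerDerivAt_thetaFour hq).pow 4

lemma hasEulerDerivAt_thetaThree_pow_four (hq : ‖q‖ < 1) :
    HasEulerDerivAt (fun p => thetaThree p ^ 4)
      ((4 * eulerLogDeriv thetaFour q + thetaThree q ^ 4 - thetaFour q ^ 4)
        * thetaThree q ^ 4) q := by
  refine ((hasEulerDerivAt_thetaThree hq).pow 4).congr_value ?_
  push_cast
  linear_combination 4 * thetaThree q ^ 4 * eulerLogDeriv_thetaThree_sub_thetaFour hq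

lemma eulerLogDeriv_thetaFour_comp_sq (hq : ‖q‖ < 1) :
    16 * eulerLogDeriv thetaFour (q ^ 2)
      = 8 * eulerLogDeriv thetaFour q + (thetaThree q ^ 4 - thetaFour q ^ 4) := by
  linear_combination 4 * eulerLogDeriv_thetaThree_sub_thetaFour hq
    - 4 * eulerLogDeriv_thetaThree_add_thetaFour hq

lemma deriv_eulerLogDeriv_thetaFour_comp_sq (hq : ‖q‖ < 1) :
    32 * (q ^ 2 * deriv (eulerLogDeriv thetaFour) (q ^ 2))
      = 8 * (q * deriv (eulerLogDeriv thetaFour) q)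
        + ((4 * eulerLogDeriv thetaFour q + thetaThree q ^ 4 - thetaFour q ^ 4) * thetaThree q ^ 4
          - 4 * eulerLogDeriv thetaFour q * thetaFour q ^ 4) := by
  have deriv_at {p : ℂ} (hp : ‖p‖ < 1) : HasEulerDerivAt (eulerLogDeriv thetaFour)
      (p * deriv (eulerLogDeriv thetaFour) p) p :=
    ⟨_, (analyticAt_eulerLogDeriv_thetaFour hp).differentiableAt.hasDerivAt, rfl⟩
  have deriv_eq := ((deriv_at (norm_pow_lt_one hq two_ne_zero)).comp_sq.const_mul
    16).unique_of_eventuallyEq (((deriv_at hq).const_mul 8).add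
      ((hasEulerDerivAt_thetaThree_pow_four hq).sub (hasEulerDerivAt_thetaFour_pow_four hq)))
    ((eventually_norm_lt_one hq).mono fun p hp => eulerLogDeriv_thetaFour_comp_sq hp)
  linear_combination deriv_eq

/-- The difference of the two sides is multiplied by `4` under `q² ↦ q`, which forces it to
vanish. -/
lemma hasEulerDerivAt_eulerLogDeriv_thetaFour (hq : ‖q‖ < 1) :
    HasEulerDerivAt (eulerLogDeriv thetaFour) (2 * eulerLogDeriv thetaFour q ^ 2
      - thetaThree q ^ 4 * (thetaThree q ^ 4 - thetaFour q ^ 4) / 8) q := by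
  have zero_lt : ‖(0 : ℂ)‖ < 1 := by simp
  have log_zero := analyticAt_eulerLogDeriv_thetaFour zero_lt
  have three_zero := (analyticAt_thetaThree zero_lt).pow 4
  have four_zero := (analyticAt_thetaFour zero_lt).pow 4
  set defect : ℂ → ℂ := fun p => p * deriv (eulerLogDeriv thetaFour) p
    - (2 * eulerLogDeriv thetaFour p ^ 2
      - thetaThree p ^ 4 * (thetaThree p ^ 4 - thetaFour p ^ 4) / 8)
  have defect_analyticAt : AnalyticAt ℂ defect 0 :=
    (analyticAt_id.mul log_zero.deriv).sub ((analyticAt_const.mul (log_zero.pow 2)).sub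
      ((three_zero.mul (three_zero.sub four_zero)).div_const))
  have defect_zero : defect 0 = 0 := by
    simp [defect, eulerLogDeriv_zero, thetaThree_zero, thetaFour_zero]
  have defect_sq (p : ℂ) (hp : ‖p‖ < 1) : defect p = 2 ^ 2 * defect (p ^ 2) := by
    have log_sq : eulerLogDeriv thetaFour (p ^ 2)
        = eulerLogDeriv thetaFour p / 2 + (thetaThree p ^ 4 - thetaFour p ^ 4) / 16 := by
      linear_combination eulerLogDeriv_thetaFour_comp_sq hp / 16
    have three_sq : thetaThree (p ^ 2) ^ 4 = (thetaThree p ^ 2 + thetaFour p ^ 2) ^ 2 / 4 := by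
      rw [thetaThree_sq_add_thetaFour_sq hp]
      ring
    have four_sq : thetaFour (p ^ 2) ^ 4 = thetaThree p ^ 2 * thetaFour p ^ 2 := by
      rw [← mul_pow, thetaThree_mul_thetaFour hp]
      ring
    simp only [defect, log_sq, three_sq, four_sq]
    linear_combination -deriv_eulerLogDeriv_thetaFour_comp_sq hp / 8
  have vanish : defect q = 0 :=
    eq_zero_of_eq_two_pow_mul_comp_sq defect_analyticAt.differentiableAt defect_zero defect_sq hq
  exact ⟨_, (analyticAt_eulerLogDeriv_thetaFour hq).differentiableAt.hasDerivAt,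
    sub_eq_zero.mp vanish⟩

lemma hasEulerDerivAt_thetaQuartic (hq : ‖q‖ < 1) :
    HasEulerDerivAt thetaQuartic (4 * eulerLogDeriv thetaFour q * thetaQuartic q
      - hauptmodul q * thetaFour q ^ 8 / 2) q := by
  refine (((hasEulerDerivAt_thetaThree_pow_four hq).const_mul 2).sub
    (hasEulerDerivAt_thetaFour_pow_four hq)).congr_value ?_
  rw [thetaQuartic]
  linear_combination hauptmodul_mul_thetaFour_pow_eight hq / 2

lemma hauptmodul_eq_div (hq : ‖q‖ < 1) :
    hauptmodul q
      = -4 * (thetaThree q ^ 4 * (thetaThree q ^ 4 - thetaFour q ^ 4)) / thetaFour q ^ 8 := by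
  rw [eq_div_iff (pow_ne_zero 8 (thetaFour_ne_zero hq)), hauptmodul_mul_thetaFour_pow_eight hq]
  ring

lemma hasEulerDerivAt_hauptmodul (hq : ‖q‖ < 1) :
    HasEulerDerivAt hauptmodul (thetaQuartic q * hauptmodul q) q := by
  have three := hasEulerDerivAt_thetaThree_pow_four hq
  have four := hasEulerDerivAt_thetaFour_pow_four hq
  have quotient := ((three.mul (three.sub four)).const_mul (-4)).div
    ((hasEulerDerivAt_thetaFour hq).pow 8) (pow_ne_zero 8 (thetaFour_ne_zero hq))
  refine (quotient.congr_of_eventuallyEq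
    ((eventually_norm_lt_one hq).mono fun p hp => hauptmodul_eq_div hp)).congr_value ?_
  have := thetaFour_ne_zero hq
  rw [hauptmodul_eq_div hq, thetaQuartic]
  push_cast
  field_simp
  ring

lemma hauptmodul_ne_zero (hq : ‖q‖ < 1) (hq0 : q ≠ 0) : hauptmodul q ≠ 0 :=
  mul_ne_zero (mul_ne_zero (by norm_num) hq0) (pow_ne_zero 24 (div_ne_zero
    (eulerFunction_ne_zero (norm_pow_lt_one hq two_ne_zero)) (eulerFunction_ne_zero hq)))

/-- A primitive, for the Euler operator `q d/dq`, of a combination of the consecutive moments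
`θ₄⁴ e z⁻ᵏ` and `θ₄⁴ e z¹⁻ᵏ`, where `z` is the `hauptmodul` and `e` is the `thetaQuartic`. -/
noncomputable def momentPrimitive (k : ℕ) (q : ℂ) : ℂ :=
  hauptmodul q ^ (-k : ℤ) * (eulerLogDeriv thetaFour q
      * (8 * eulerLogDeriv thetaFour q + 4 * k * thetaQuartic q) / thetaFour q ^ 4
    + (k ^ 2 - (k ^ 2 - k / 2 + 1 / 8) * hauptmodul q) * thetaFour q ^ 4)

lemma hasEulerDerivAt_momentPrimitive (k : ℕ) (hq : ‖q‖ < 1) (hq0 : q ≠ 0) :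
    HasEulerDerivAt (momentPrimitive k)
      (thetaFour q ^ 4 * thetaQuartic q
        * ((k - 1 / 2) ^ 3 * hauptmodul q - k ^ 3) * hauptmodul q ^ (-k : ℤ)) q := by
  have log : HasEulerDerivAt (eulerLogDeriv thetaFour)
      (2 * eulerLogDeriv thetaFour q ^ 2 + hauptmodul q * thetaFour q ^ 8 / 32) q :=
    (hasEulerDerivAt_eulerLogDeriv_thetaFour hq).congr_value
      (by linear_combination -hauptmodul_mul_thetaFour_pow_eight hq / 32)
  have four := hasEulerDerivAt_thetaFour_pow_four hq
  have quartic := hasEulerDerivAt_thetaQuartic hq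
  have haupt := hasEulerDerivAt_hauptmodul hq
  have const : HasEulerDerivAt (fun _ => (k : ℂ) ^ 2) 0 q := ⟨0, hasDerivAt_const _ _, mul_zero q⟩
  have primitive := (haupt.zpow (-k) (hauptmodul_ne_zero hq hq0)).mul
    (((log.mul ((log.const_mul 8).add (quartic.const_mul (4 * k)))).div four
      (pow_ne_zero 4 (thetaFour_ne_zero hq))).add
      ((const.sub (haupt.const_mul (k ^ 2 - k / 2 + 1 / 8))).mul four))
  refine primitive.congr_value ?_
  have := thetaFour_ne_zero hq
  push_cast
  generalize hauptmodul q ^ (-k : ℤ) = w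
  field_simp
  linear_combination -8192 * k ^ 2 * w * eulerLogDeriv thetaFour q * thetaQuartic_sq hq

end DifferentialSystem

section CircleAverage

variable {f e u v Φ ζ : ℂ → ℂ} {c : ℂ} {R : ℝ}

lemma circleAverage_eq_zero_of_hasEulerDerivAt (hR : 0 < R)
    (h : ∀ q ∈ sphere 0 R, HasEulerDerivAt f (v q) q) : circleAverage v 0 R = 0 := by
  choose! f' hf' hv using h
  have integrand_eq : EqOn (fun q => (q - 0)⁻¹ • v q) f' (sphere 0 R) := fun q hq => by
    have : q ≠ 0 := ne_of_mem_sphere hq hR.ne'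
    simp only [← hv q hq, sub_zero, smul_eq_mul]
    field_simp
  rw [circleAverage_eq_circleIntegral hR.ne', circleIntegral.integral_congr hR.le integrand_eq,
    circleIntegral.integral_eq_zero_of_hasDerivWithinAt hR.le
      fun q hq => (hf' q hq).hasDerivWithinAt, smul_zero]

lemma circleAverage_eq_of_analyticAt (hR : 0 ≤ R) (hf : ∀ q ∈ closedBall c R, AnalyticAt ℂ f q) :
    circleAverage f c R = f c := by
  refine DiffContOnCl.circleAverage ?_
  rw [abs_of_nonneg hR]
  exact ⟨fun q hq => (hf q (ball_subset_closedBall hq)).differentiableWithinAt,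
    fun q hq => (hf q (closure_ball_subset_closedBall hq)).continuousAt.continuousWithinAt⟩

lemma hasSum_circleAverage_mul_pow {b : ℕ → ℂ} (hb : Summable fun k => ‖b k‖)
    (hΦ : ContinuousOn Φ (sphere c |R|)) (hζ : ContinuousOn ζ (sphere c |R|))
    (hζ_le : ∀ q ∈ sphere c |R|, ‖ζ q‖ ≤ 1) :
    HasSum (fun k => b k * circleAverage (fun q => Φ q * ζ q ^ k) c R)
      (circleAverage (fun q => Φ q * ∑' k, b k * ζ q ^ k) c R) := by
  have mem (θ : ℝ) : circleMap c R θ ∈ sphere c |R| := circleMap_mem_sphere' c R θ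
  have Φ_cont : Continuous fun θ => Φ (circleMap c R θ) :=
    hΦ.comp_continuous (continuous_circleMap c R) mem
  have ζ_cont : Continuous fun θ => ζ (circleMap c R θ) :=
    hζ.comp_continuous (continuous_circleMap c R) mem
  have term_le (k : ℕ) (θ : ℝ) : ‖b k * ζ (circleMap c R θ) ^ k‖ ≤ ‖b k‖ := by
    rw [norm_mul, norm_pow]
    exact mul_le_of_le_one_right (norm_nonneg _) (pow_le_one₀ (norm_nonneg _) (hζ_le _ (mem θ)))
  have sum := intervalIntegral.hasSum_integral_of_dominated_convergence
    (μ := MeasureTheory.volume) (a := 0) (b := 2 * π)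
    (F := fun k θ => Φ (circleMap c R θ) * (b k * ζ (circleMap c R θ) ^ k))
    (fun k θ => ‖Φ (circleMap c R θ)‖ * ‖b k‖)
    (fun k => (Φ_cont.mul (continuous_const.mul (ζ_cont.pow k))).aestronglyMeasurable)
    (fun k => .of_forall fun θ _ => by
      rw [norm_mul]
      exact mul_le_mul_of_nonneg_left (term_le k θ) (norm_nonneg _))
    (.of_forall fun θ _ => hb.mul_left _)
    (by
      simp only [tsum_mul_left]
      exact (Φ_cont.norm.mul continuous_const).intervalIntegrable _ _)
    (.of_forall fun θ _ => ((hb.of_norm_bounded (term_le · θ)).hasSum).mul_left _)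
  simp only [mul_left_comm (Φ _) (b _), intervalIntegral.integral_const_mul] at sum
  simpa only [circleAverage_def, mul_smul_comm] using sum.const_smul (2 * π)⁻¹

/-- If `f` has a zero of order `n`, then the `n`-th average is the value at `0` of a function that
does not vanish there. -/
lemma eventuallyEq_zero_of_circleAverage_eq_zero (hf : AnalyticAt ℂ f 0) (he : AnalyticAt ℂ e 0)
    (he0 : e 0 ≠ 0) (hu : AnalyticAt ℂ u 0) (hu0 : u 0 ≠ 0)
    (h : ∀ᶠ r in 𝓝[>] 0, ∀ n : ℕ,
      circleAverage (fun q => f q * e q * (q * u q) ^ (-n : ℤ)) 0 r = 0) : f =ᶠ[𝓝 0] 0 := by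
  by_contra f_ne
  obtain ⟨n, g, hg, hg0, f_eq⟩ := hf.exists_eventuallyEq_pow_smul_nonzero_iff.mpr f_ne
  set G : ℂ → ℂ := fun q => g q * e q / u q ^ n
  have G_analyticAt : AnalyticAt ℂ G 0 := (hg.mul he).div (hu.pow n) (pow_ne_zero n hu0)
  obtain ⟨ρ, hρ, near⟩ := eventually_nhds_iff_ball.mp (f_eq.and G_analyticAt.eventually_analyticAt)
  obtain ⟨r, average_zero, hr0, hrρ⟩ := (h.and (Ioo_mem_nhdsGT hρ)).exists
  refine div_ne_zero (mul_ne_zero hg0 he0) (pow_ne_zero n hu0) (?_ : G 0 = 0)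
  rw [← circleAverage_eq_of_analyticAt hr0.le
    fun q hq => (near q (closedBall_subset_ball hrρ hq)).2]
  refine (circleAverage_congr_sphere fun q hq => ?_).trans (average_zero n)
  rw [abs_of_pos hr0] at hq
  have : q ≠ 0 := ne_of_mem_sphere hq hr0.ne'
  simp only [G, (near q (closedBall_subset_ball hrρ (sphere_subset_closedBall hq))).1, sub_zero,
    smul_eq_mul, zpow_neg, zpow_natCast, mul_pow]
  field_simp

end CircleAverage

section ClausenSeries

/-- The coefficient `(1/2)ₖ / k!` of the binomial series of `(1 - x)^(-1/2)`. -/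
noncomputable def invSqrtCoeff (k : ℕ) : ℂ := poch (1 / 2) k / (Nat.factorial k : ℂ)

/-- The hypergeometric series `₃F₂(1/2, 1/2, 1/2; 1, 1; x)`. -/
noncomputable def clausenSeries (x : ℂ) : ℂ := ∑' k : ℕ, invSqrtCoeff k ^ 3 * x ^ k

lemma invSqrtCoeff_zero : invSqrtCoeff 0 = 1 := by simp [invSqrtCoeff, poch]

lemma invSqrtCoeff_succ (k : ℕ) :
    (k + 1) * invSqrtCoeff (k + 1) = (k + 1 / 2) * invSqrtCoeff k := by
  have succ_ne : (k + 1 : ℂ) ≠ 0 := by exact_mod_cast k.succ_ne_zero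
  have factorial_ne : (Nat.factorial k : ℂ) ≠ 0 := by exact_mod_cast k.factorial_ne_zero
  rw [invSqrtCoeff, invSqrtCoeff, poch, Finset.prod_range_succ, ← poch, Nat.factorial_succ]
  push_cast
  field_simp
  ring

lemma two_mul_add_one_mul_norm_invSqrtCoeff_sq_le_one (k : ℕ) :
    (2 * k + 1) * ‖invSqrtCoeff k‖ ^ 2 ≤ 1 := by
  induction k with
  | zero => simp [invSqrtCoeff_zero]
  | succ k ih =>
    have norm_succ : (k + 1) * ‖invSqrtCoeff (k + 1)‖ = (k + 1 / 2) * ‖invSqrtCoeff k‖ := by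
      have norm_eq := congrArg norm (invSqrtCoeff_succ k)
      rw [norm_mul, norm_mul] at norm_eq
      convert norm_eq
      · exact_mod_cast (Complex.norm_natCast (k + 1)).symm
      · rw [← Complex.norm_of_nonneg (by positivity : (0 : ℝ) ≤ k + 1 / 2)]
        push_cast
        rfl
    refine le_of_mul_le_mul_left ?_ (by positivity : (0 : ℝ) < (k + 1) ^ 2)
    calc
      (k + 1 : ℝ) ^ 2 * ((2 * (k + 1 : ℕ) + 1) * ‖invSqrtCoeff (k + 1)‖ ^ 2)
        = (2 * k + 3) * ((k + 1) * ‖invSqrtCoeff (k + 1)‖) ^ 2 := by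
          push_cast
          ring
      _ = (2 * k + 3) * (2 * k + 1) / 4 * ((2 * k + 1) * ‖invSqrtCoeff k‖ ^ 2) := by
          rw [norm_succ]
          ring
      _ ≤ (2 * k + 3) * (2 * k + 1) / 4 * 1 := by gcongr
      _ ≤ (k + 1 : ℝ) ^ 2 * 1 := by linarith

lemma summable_norm_invSqrtCoeff_pow_three : Summable fun k => ‖invSqrtCoeff k ^ 3‖ := by
  have rpow_summable : Summable fun k : ℕ => ((k + 1 : ℕ) : ℝ) ^ (-(3 / 2) : ℝ) :=
    (summable_nat_add_iff 1).mpr (Real.summable_nat_rpow.mpr (by norm_num))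
  refine rpow_summable.of_nonneg_of_le (fun k => norm_nonneg _) fun k => ?_
  have sq_le : ‖invSqrtCoeff k‖ ^ 2 ≤ ((k + 1 : ℕ) : ℝ)⁻¹ := by
    rw [← one_div, le_div_iff₀' (by positivity)]
    refine le_trans ?_ (two_mul_add_one_mul_norm_invSqrtCoeff_sq_le_one k)
    gcongr
    push_cast
    linarith [k.cast_nonneg (α := ℝ)]
  refine (pow_le_pow_iff_left₀ (norm_nonneg _) (by positivity) two_ne_zero).mp ?_
  calc
    ‖invSqrtCoeff k ^ 3‖ ^ 2 = (‖invSqrtCoeff k‖ ^ 2) ^ 3 := by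
      rw [norm_pow]
      ring
    _ ≤ (((k + 1 : ℕ) : ℝ)⁻¹) ^ 3 := by gcongr
    _ = (((k + 1 : ℕ) : ℝ) ^ (-(3 / 2) : ℝ)) ^ 2 := by
      rw [← Real.rpow_mul_natCast (by positivity), inv_pow, ← Real.rpow_natCast,
        ← Real.rpow_neg (by positivity)]
      norm_num

lemma analyticAt_clausenSeries {x : ℂ} (hx : ‖x‖ < 1) : AnalyticAt ℂ clausenSeries x := by
  refine DifferentiableOn.analyticAt (s := ball 0 1) ?_ (isOpen_ball.mem_nhds (by simpa using hx))
  refine Complex.differentiableOn_tsum_of_summable_norm summable_norm_invSqrtCoeff_pow_three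
    (fun k => by fun_prop) isOpen_ball fun k y hy => ?_
  rw [norm_mul, norm_pow y]
  exact mul_le_of_le_one_right (norm_nonneg _)
    (pow_le_one₀ (norm_nonneg _) (mem_ball_zero_iff.mp hy).le)

end ClausenSeries

section Moments

variable {q : ℂ} {R : ℝ}

lemma analyticAt_eulerFunction_sq_div (hq : ‖q‖ < 1) :
    AnalyticAt ℂ (fun p => -64 * (eulerFunction (p ^ 2) / eulerFunction p) ^ 24) q :=
  analyticAt_const.mul ((((analyticAt_eulerFunction (norm_pow_lt_one hq two_ne_zero)).comp_of_eq
    (analyticAt_id.pow 2) rfl).div (analyticAt_eulerFunction hq) (eulerFunction_ne_zero hq)).pow 24)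

lemma hauptmodul_eq_mul (q : ℂ) :
    hauptmodul q = q * (-64 * (eulerFunction (q ^ 2) / eulerFunction q) ^ 24) := by
  rw [hauptmodul]
  ring

lemma hauptmodul_zero : hauptmodul 0 = 0 := by simp [hauptmodul]

lemma analyticAt_hauptmodul (hq : ‖q‖ < 1) : AnalyticAt ℂ hauptmodul q := by
  rw [funext hauptmodul_eq_mul]
  exact analyticAt_id.mul (analyticAt_eulerFunction_sq_div hq)

lemma analyticAt_clausenSeries_hauptmodul (hq : ‖q‖ < 1) (hz : ‖hauptmodul q‖ < 1) :
    AnalyticAt ℂ (fun p => clausenSeries (hauptmodul p)) q :=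
  (analyticAt_clausenSeries hz).comp_of_eq (analyticAt_hauptmodul hq) rfl

lemma analyticAt_thetaQuartic (hq : ‖q‖ < 1) : AnalyticAt ℂ thetaQuartic q :=
  (analyticAt_const.mul ((analyticAt_thetaThree hq).pow 4)).sub ((analyticAt_thetaFour hq).pow 4)

lemma thetaQuartic_zero : thetaQuartic 0 = 1 := by
  rw [thetaQuartic, thetaThree_zero, thetaFour_zero]
  norm_num

lemma norm_lt_one_of_mem_sphere (hR1 : R < 1) (hq : q ∈ sphere 0 R) : ‖q‖ < 1 :=
  (mem_sphere_zero_iff_norm.mp hq).trans_lt hR1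

lemma continuousOn_mul_hauptmodul_zpow {f : ℂ → ℂ} (hR : 0 < R) (hR1 : R < 1)
    (hf : ∀ q ∈ sphere 0 R, AnalyticAt ℂ f q) (m : ℤ) :
    ContinuousOn (fun q => f q * hauptmodul q ^ m) (sphere 0 R) := fun q hq => by
  have hq1 := norm_lt_one_of_mem_sphere hR1 hq
  exact ((hf q hq).mul ((analyticAt_hauptmodul hq1).zpow
    (hauptmodul_ne_zero hq1 (ne_of_mem_sphere hq hR.ne')))).continuousAt.continuousWithinAt

lemma circleAverage_thetaQuartic_mul_hauptmodul_zpow (hR : 0 < R) (hR1 : R < 1) {m : ℤ} :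
    circleAverage (fun q => thetaQuartic q * hauptmodul q ^ m) 0 R = if m = 0 then 1 else 0 := by
  split_ifs with hm
  · simp only [hm, zpow_zero, mul_one]
    rw [circleAverage_eq_of_analyticAt hR.le fun q hq =>
      analyticAt_thetaQuartic ((mem_closedBall_zero_iff.mp hq).trans_lt hR1), thetaQuartic_zero]
  · refine circleAverage_eq_zero_of_hasEulerDerivAt (f := fun q => (m : ℂ)⁻¹ * hauptmodul q ^ m) hR
      fun q hq => ?_
    have hq1 := norm_lt_one_of_mem_sphere hR1 hq
    have := (Int.cast_ne_zero (α := ℂ)).mpr hm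
    refine (((hasEulerDerivAt_hauptmodul hq1).zpow m
      (hauptmodul_ne_zero hq1 (ne_of_mem_sphere hq hR.ne'))).const_mul _).congr_value ?_
    field_simp

lemma analyticAt_thetaFour_pow_four_mul_thetaQuartic (hq : ‖q‖ < 1) :
    AnalyticAt ℂ (fun p => thetaFour p ^ 4 * thetaQuartic p) q :=
  ((analyticAt_thetaFour hq).pow 4).mul (analyticAt_thetaQuartic hq)

/-- The recursion of the moments in `k` is that of the coefficients of `clausenSeries`, because
`momentPrimitive` is single-valued on the circle. -/
lemma circleAverage_thetaFour_pow_four_mul_thetaQuartic_mul_hauptmodul_zpow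
    (hR : 0 < R) (hR1 : R < 1) (k : ℕ) :
    circleAverage (fun q => thetaFour q ^ 4 * thetaQuartic q * hauptmodul q ^ (-k : ℤ)) 0 R
      = invSqrtCoeff k ^ 3 := by
  induction k with
  | zero =>
    simp only [Nat.cast_zero, neg_zero, zpow_zero, mul_one, invSqrtCoeff_zero, one_pow]
    rw [circleAverage_eq_of_analyticAt hR.le fun q hq =>
      analyticAt_thetaFour_pow_four_mul_thetaQuartic ((mem_closedBall_zero_iff.mp hq).trans_lt hR1),
      thetaFour_zero, thetaQuartic_zero]
    norm_num
  | succ k ih =>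
    have integrable (c : ℂ) (m : ℤ) : CircleIntegrable (fun q =>
        c • (thetaFour q ^ 4 * thetaQuartic q * hauptmodul q ^ m)) 0 R :=
      ((continuousOn_mul_hauptmodul_zpow hR hR1 (fun q hq =>
        analyticAt_thetaFour_pow_four_mul_thetaQuartic
          (norm_lt_one_of_mem_sphere hR1 hq)) m).const_smul c).circleIntegrable hR.le
    have average_zero := circleAverage_eq_zero_of_hasEulerDerivAt hR
      (f := momentPrimitive (k + 1)) (v := fun q =>
        (k + 1 / 2 : ℂ) ^ 3 • (thetaFour q ^ 4 * thetaQuartic q * hauptmodul q ^ (-k : ℤ))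
          - (k + 1 : ℂ) ^ 3
            • (thetaFour q ^ 4 * thetaQuartic q * hauptmodul q ^ (-(k + 1 : ℕ) : ℤ)))
      fun q hq => by
        have hq1 := norm_lt_one_of_mem_sphere hR1 hq
        have hq0 : q ≠ 0 := ne_of_mem_sphere hq hR.ne'
        have shift : hauptmodul q ^ (-k : ℤ)
            = hauptmodul q * hauptmodul q ^ (-(k + 1 : ℕ) : ℤ) := by
          rw [← zpow_one_add₀ (hauptmodul_ne_zero hq1 hq0)]
          push_cast
          ring_nf
        refine (hasEulerDerivAt_momentPrimitive (k + 1) hq1 hq0).congr_value ?_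
        rw [shift, smul_eq_mul, smul_eq_mul]
        push_cast
        ring
    rw [circleAverage_fun_sub (integrable _ _) (integrable _ _), circleAverage_fun_smul,
      circleAverage_fun_smul, ih, smul_eq_mul, smul_eq_mul, ← mul_pow, ← invSqrtCoeff_succ,
      mul_pow, ← mul_sub, mul_eq_zero, sub_eq_zero] at average_zero
    exact (average_zero.resolve_left (pow_ne_zero 3 (by exact_mod_cast k.succ_ne_zero))).symm

lemma circleAverage_clausenSeries_hauptmodul (hR : 0 < R) (hR1 : R < 1)
    (h_le : ∀ q ∈ sphere 0 R, ‖hauptmodul q‖ ≤ 1) (n : ℕ) :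
    circleAverage (fun q => thetaQuartic q * hauptmodul q ^ (-n : ℤ)
      * clausenSeries (hauptmodul q)) 0 R = invSqrtCoeff n ^ 3 := by
  have sum := hasSum_circleAverage_mul_pow summable_norm_invSqrtCoeff_pow_three
    (c := 0) (R := R) (Φ := fun q => thetaQuartic q * hauptmodul q ^ (-n : ℤ)) (ζ := hauptmodul)
    (by
      rw [abs_of_pos hR]
      exact continuousOn_mul_hauptmodul_zpow hR hR1
        (fun q hq => analyticAt_thetaQuartic (norm_lt_one_of_mem_sphere hR1 hq)) (-n))
    (by
      rw [abs_of_pos hR]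
      exact fun q hq => (analyticAt_hauptmodul
        (norm_lt_one_of_mem_sphere hR1 hq)).continuousAt.continuousWithinAt)
    (by rwa [abs_of_pos hR])
  have average_eq (k : ℕ) : circleAverage
      (fun q => thetaQuartic q * hauptmodul q ^ (-n : ℤ) * hauptmodul q ^ k) 0 R
        = if k = n then 1 else 0 := by
    rw [circleAverage_congr_sphere (f₂ := fun q => thetaQuartic q * hauptmodul q ^ (k - n : ℤ)),
      circleAverage_thetaQuartic_mul_hauptmodul_zpow hR hR1]
    · simp only [sub_eq_zero, Nat.cast_inj]
    · intro q hq
      rw [abs_of_pos hR] at hq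
      have hq1 := norm_lt_one_of_mem_sphere hR1 hq
      simp only [mul_assoc]
      rw [← zpow_natCast, ← zpow_add₀ (hauptmodul_ne_zero hq1 (ne_of_mem_sphere hq hR.ne')),
        neg_add_eq_sub]
  have single := hasSum_single (f := fun k => if k = n then invSqrtCoeff k ^ 3 else 0) n
    fun k hk => if_neg hk
  rw [if_pos rfl] at single
  simp only [average_eq, mul_ite, mul_one, mul_zero] at sum
  exact sum.unique single

lemma clausenSeries_hauptmodul_eventuallyEq :
    (fun q => clausenSeries (hauptmodul q)) =ᶠ[𝓝 0] fun q => thetaFour q ^ 4 := by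
  have zero_lt : ‖(0 : ℂ)‖ < 1 := by simp
  have near : ∀ᶠ q in 𝓝 0, ‖hauptmodul q‖ < 1 :=
    (analyticAt_hauptmodul zero_lt).continuousAt.norm.eventually_lt_const
      (by simp [hauptmodul_zero])
  obtain ⟨ρ, hρ, hball⟩ := eventually_nhds_iff_ball.mp near
  have difference_zero := eventuallyEq_zero_of_circleAverage_eq_zero
    (f := fun q => thetaFour q ^ 4 - clausenSeries (hauptmodul q))
    (((analyticAt_thetaFour zero_lt).pow 4).sub (analyticAt_clausenSeries_hauptmodul zero_lt
      near.self_of_nhds)) (analyticAt_thetaQuartic zero_lt) (by simp [thetaQuartic_zero])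
    (analyticAt_eulerFunction_sq_div zero_lt) (by simp [eulerFunction_zero]) ?_
  · filter_upwards [difference_zero] with q hq using (sub_eq_zero.mp hq).symm
  filter_upwards [Ioo_mem_nhdsGT hρ, Ioo_mem_nhdsGT one_pos] with R ⟨hR, hRρ⟩ ⟨_, hR1⟩ n
  have z_lt {q : ℂ} (hq : q ∈ sphere 0 R) : ‖hauptmodul q‖ < 1 :=
    hball q (closedBall_subset_ball hRρ (sphere_subset_closedBall hq))
  have theta_integrable := (continuousOn_mul_hauptmodul_zpow hR hR1 (fun q hq =>
    analyticAt_thetaFour_pow_four_mul_thetaQuartic (norm_lt_one_of_mem_sphere hR1 hq))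
    (-n)).circleIntegrable hR.le
  have clausen_integrable := ((continuousOn_mul_hauptmodul_zpow hR hR1 (fun q hq =>
    analyticAt_thetaQuartic (norm_lt_one_of_mem_sphere hR1 hq)) (-n)).fun_mul fun q hq =>
      (analyticAt_clausenSeries_hauptmodul (norm_lt_one_of_mem_sphere hR1 hq)
        (z_lt hq)).continuousAt.continuousWithinAt).circleIntegrable hR.le
  have split := circleAverage_fun_sub theta_integrable clausen_integrable
  rw [circleAverage_thetaFour_pow_four_mul_thetaQuartic_mul_hauptmodul_zpow hR hR1,
    circleAverage_clausenSeries_hauptmodul hR hR1 (fun q hq => (z_lt hq).le), sub_self] at split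
  refine Eq.trans ?_ split
  simp only [← hauptmodul_eq_mul]
  congr 1
  funext q
  ring

end Moments

section Bounds

variable {q x y p p' : ℂ}

lemma norm_qPochhammer_le_of_forall (hp : ‖p‖ < 1) (hp' : ‖p'‖ < 1)
    (h : ∀ k : ℕ, ‖1 - x * p ^ k‖ ≤ ‖1 - y * p' ^ k‖) : ‖qPochhammer x p‖ ≤ ‖qPochhammer y p'‖ := by
  refine le_of_tendsto_of_tendsto' (tendsto_prod_qPochhammer x hp).norm
    (tendsto_prod_qPochhammer y hp').norm fun n => ?_
  rw [norm_prod, norm_prod]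
  exact Finset.prod_le_prod (fun k _ => norm_nonneg _) fun k _ => h k

lemma norm_qPochhammer_le {r s : ℝ} (hx : ‖x‖ ≤ r) (hp : ‖p‖ ≤ s) (hs : s < 1) :
    ‖qPochhammer x p‖ ≤ ‖qPochhammer (-r) s‖ := by
  have hr0 := (norm_nonneg x).trans hx
  have hs0 := (norm_nonneg p).trans hp
  refine norm_qPochhammer_le_of_forall (hp.trans_lt hs)
    (by rwa [Complex.norm_of_nonneg hs0]) fun k => ?_
  calc ‖1 - x * p ^ k‖ ≤ ‖(1 : ℂ)‖ + ‖x * p ^ k‖ := norm_sub_le _ _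
    _ ≤ 1 + r * s ^ k := by
      rw [norm_one, norm_mul, norm_pow]
      gcongr
    _ = ‖1 - -(r : ℂ) * s ^ k‖ := by
      rw [neg_mul, sub_neg_eq_add]
      norm_cast
      rw [Real.norm_of_nonneg (by positivity)]

lemma hauptmodul_eq_mul_qPochhammer_pow (hq : ‖q‖ < 1) :
    hauptmodul q = -64 * q * qPochhammer (-q) q ^ 24 := by
  rw [hauptmodul, ← eulerFunction_mul_qPochhammer_neg hq,
    mul_div_cancel_left₀ _ (eulerFunction_ne_zero hq)]

lemma hauptmodul_eq_div_qPochhammer_pow (hq : ‖q‖ < 1) :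
    hauptmodul q = -64 * q / qPochhammer q (q ^ 2) ^ 24 := by
  have := eulerFunction_ne_zero (norm_pow_lt_one hq two_ne_zero)
  rw [hauptmodul, ← qPochhammer_self_sq_mul_eulerFunction hq]
  field_simp

lemma norm_hauptmodul_le_of_norm_le {r : ℝ} (hq : ‖q‖ ≤ r) (hr : r < 1) :
    ‖hauptmodul q‖ ≤ ‖hauptmodul r‖ := by
  have hr0 : 0 ≤ r := (norm_nonneg q).trans hq
  have norm_r : ‖(r : ℂ)‖ = r := Complex.norm_of_nonneg hr0
  rw [hauptmodul_eq_mul_qPochhammer_pow (hq.trans_lt hr),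
    hauptmodul_eq_mul_qPochhammer_pow (by rwa [norm_r])]
  simp only [norm_mul, norm_pow, norm_r]
  gcongr
  exact norm_qPochhammer_le (by rwa [norm_neg]) hq hr

lemma norm_one_sub_lt_one_add_norm (h : q ≠ -‖q‖) : ‖1 - q‖ < 1 + ‖q‖ := by
  rw [sub_eq_add_neg, ← norm_neg q, ← norm_one (α := ℂ), ← not_sameRay_iff_norm_add_lt]
  intro ray
  have := ray.norm_smul_eq
  rw [norm_one, one_smul, norm_neg, Complex.real_smul, mul_one] at this
  exact h (neg_eq_iff_eq_neg.mp this)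

lemma norm_hauptmodul_neg_norm_lt (hq : ‖q‖ < 1) (h : q ≠ -‖q‖) :
    ‖hauptmodul (-‖q‖)‖ < ‖hauptmodul q‖ := by
  have norm_neg_norm : ‖-(‖q‖ : ℂ)‖ = ‖q‖ := by rw [norm_neg, norm_real, norm_norm]
  have hq2 := norm_pow_lt_one hq two_ne_zero
  have hn : ‖-(‖q‖ : ℂ)‖ < 1 := by rwa [norm_neg_norm]
  have hn2 := norm_pow_lt_one hn two_ne_zero
  have hq0 : q ≠ 0 := by rintro rfl; simp at h
  have pochhammer_lt : ‖qPochhammer q (q ^ 2)‖ < ‖qPochhammer (-‖q‖) ((-‖q‖ : ℂ) ^ 2)‖ := by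
    rw [qPochhammer_eq_one_sub_mul q hq2, qPochhammer_eq_one_sub_mul _ hn2, norm_mul, norm_mul]
    have tail_arg : -(‖q‖ : ℂ) * (-‖q‖) ^ 2 = -((‖q‖ ^ 3 : ℝ) : ℂ) := by
      push_cast
      ring
    have tail_le : ‖qPochhammer (q * q ^ 2) (q ^ 2)‖
        ≤ ‖qPochhammer (-(‖q‖ : ℂ) * (-‖q‖) ^ 2) ((-‖q‖) ^ 2)‖ := by
      rw [tail_arg, neg_sq, ← ofReal_pow]
      exact norm_qPochhammer_le (by rw [← pow_succ', norm_pow]) (norm_pow q 2).le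
        (pow_lt_one₀ (norm_nonneg q) hq two_ne_zero)
    have tail_pos : 0 < ‖qPochhammer (q * q ^ 2) (q ^ 2)‖ := norm_pos_iff.mpr <|
      qPochhammer_ne_zero (by simpa only [← pow_succ'] using norm_pow_lt_one hq three_ne_zero) hq2
    have first_lt : ‖1 - q‖ < ‖1 - -(‖q‖ : ℂ)‖ := by
      refine (norm_one_sub_lt_one_add_norm h).trans_eq ?_
      rw [sub_neg_eq_add]
      norm_cast
      rw [Real.norm_of_nonneg (by positivity)]
    exact mul_lt_mul_of_lt_of_le_of_nonneg_of_pos first_lt tail_le (norm_nonneg _)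
      (tail_pos.trans_le tail_le)
  have pochhammer_pos := norm_pos_iff.mpr (qPochhammer_ne_zero hq hq2)
  rw [hauptmodul_eq_div_qPochhammer_pow hq, hauptmodul_eq_div_qPochhammer_pow hn]
  simp only [norm_div, norm_mul, norm_pow, norm_neg_norm]
  gcongr
  exact mul_pos (by simp) (norm_pos_iff.mpr hq0)

lemma norm_hauptmodul_neg_norm_le (hq : ‖q‖ < 1) : ‖hauptmodul (-‖q‖)‖ ≤ ‖hauptmodul q‖ := by
  by_cases h : q = -‖q‖
  · rw [← h]
  · exact (norm_hauptmodul_neg_norm_lt hq h).le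

end Bounds

section Arc

variable {t : ℝ}

lemma qParam_one_int_add_half (n : ℤ) :
    qParam 1 (n + (1 + I) / 2) = -(rexp (-π) : ℂ) := by
  have exponent_eq : 2 * π * I * (n + (1 + I) / 2) / (1 : ℝ)
      = π * I + (-π : ℝ) + n * (2 * π * I) := by
    push_cast
    linear_combination (π : ℂ) * I_sq
  rw [qParam, exponent_eq, Complex.exp_periodic.int_mul n, Complex.exp_add, exp_pi_mul_I,
    neg_one_mul, ofReal_exp]

lemma norm_qParam_one_add_I_div_two (t : ℝ) : ‖qParam 1 (t + I / 2)‖ = rexp (-π) := by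
  rw [Function.Periodic.norm_qParam]
  have im_eq : (t + I / 2 : ℂ).im = 1 / 2 := by simp
  rw [im_eq]
  ring_nf

lemma qParam_one_ne_neg_norm (ht : t ∈ Ioo (-1 / 2 : ℝ) (1 / 2)) :
    qParam 1 (t + I / 2) ≠ -‖qParam 1 (t + I / 2)‖ := by
  rw [norm_qParam_one_add_I_div_two, ← qParam_one_int_add_half 0, qParam, qParam, Ne,
    Complex.exp_eq_exp_iff_exists_int]
  rintro ⟨n, hn⟩
  have ht_eq : (t : ℂ) = (1 / 2 + n : ℝ) := by
    have := two_pi_I_ne_zero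
    push_cast at hn ⊢
    refine mul_left_cancel₀ this ?_
    linear_combination hn
  rw [ofReal_inj] at ht_eq
  obtain ⟨lower, upper⟩ := ht
  have neg_one_lt : (-1 : ℤ) < n := by exact_mod_cast (by linarith : (-1 : ℝ) < n)
  have lt_zero : n < 0 := by exact_mod_cast (by linarith : (n : ℝ) < 0)
  lia

lemma norm_hauptmodul_neg_exp_neg_pi : ‖hauptmodul (-(rexp (-π) : ℂ))‖ = 1 := by
  have product := hauptmodul_mul_hauptmodul_inversion (by simp : 0 < ((1 + I) / 2).im)
  have inversion_eq : -1 / (2 * ((1 + I) / 2)) = (-1 : ℤ) + (1 + I) / 2 := by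
    have : 1 + I ≠ 0 := fun h => by simpa using congrArg im h
    field_simp
    push_cast
    linear_combination -I_sq
  rw [inversion_eq, qParam_one_int_add_half, ← zero_add ((1 + I) / 2), ← Int.cast_zero,
    qParam_one_int_add_half, ← sq] at product
  rw [← pow_eq_one_iff_of_nonneg (norm_nonneg _) two_ne_zero, ← norm_pow, product, norm_one]

lemma one_le_norm_hauptmodul {q : ℂ} (hq : q ∈ sphere 0 (rexp (-π))) : 1 ≤ ‖hauptmodul q‖ := by
  rw [mem_sphere_zero_iff_norm] at hq
  rw [← norm_hauptmodul_neg_exp_neg_pi, ← hq]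
  exact norm_hauptmodul_neg_norm_le (hq ▸ Real.exp_lt_one_iff.mpr (neg_neg_of_pos pi_pos))

/-- The argument `-1/(2τ)` at the point `τ = t + i/2`. -/
noncomputable def invertedSegment (t : ℝ) : ℂ := -1 / (2 * (t + I / 2))

lemma add_I_div_two_im_pos (t : ℝ) : 0 < (t + I / 2 : ℂ).im := by simp

lemma norm_qParam_invertedSegment_lt_one (t : ℝ) : ‖qParam 1 (invertedSegment t)‖ < 1 :=
  norm_qParam_one_lt_one (neg_one_div_two_mul_im_pos (add_I_div_two_im_pos t))

lemma hauptmodul_invertedSegment (t : ℝ) :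
    hauptmodul (qParam 1 (invertedSegment t)) = (hauptmodul (qParam 1 (t + I / 2)))⁻¹ :=
  eq_inv_of_mul_eq_one_right (hauptmodul_mul_hauptmodul_inversion (add_I_div_two_im_pos t))

lemma norm_hauptmodul_invertedSegment_lt_one (ht : t ∈ Ioo (-1 / 2 : ℝ) (1 / 2)) :
    ‖hauptmodul (qParam 1 (invertedSegment t))‖ < 1 := by
  have one_lt := norm_hauptmodul_neg_norm_lt
    (norm_qParam_one_lt_one (add_I_div_two_im_pos t)) (qParam_one_ne_neg_norm ht)
  rw [norm_qParam_one_add_I_div_two, norm_hauptmodul_neg_exp_neg_pi] at one_lt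
  rw [hauptmodul_invertedSegment, norm_inv]
  exact inv_lt_one_of_one_lt₀ one_lt

lemma qParam_invertedSegment_zero : qParam 1 (invertedSegment 0) = rexp (-2 * π) := by
  have : invertedSegment 0 = I := by
    simp [invertedSegment, mul_div_cancel₀]
  rw [this, qParam, ofReal_exp]
  congr 1
  push_cast
  linear_combination 2 * (π : ℂ) * I_sq

/-- The identity theorem, along the disc `|q| ≤ e^(-2π)` and the arc `q = exp(2πi · -1/(2τ))`. -/
lemma clausenSeries_hauptmodul_invertedSegment (ht : t ∈ Ioo (-1 / 2 : ℝ) (1 / 2)) :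
    clausenSeries (hauptmodul (qParam 1 (invertedSegment t)))
      = thetaFour (qParam 1 (invertedSegment t)) ^ 4 := by
  set disc : Set ℂ := closedBall 0 (rexp (-2 * π))
  set arc : Set ℂ := (fun t => qParam 1 (invertedSegment t)) '' Ioo (-1 / 2) (1 / 2)
  have exp_lt : rexp (-2 * π) < 1 := Real.exp_lt_one_iff.mpr (by linarith [pi_pos])
  have zero_mem : (0 : ℝ) ∈ Ioo (-1 / 2 : ℝ) (1 / 2) := by norm_num
  have apex_mem_arc : (rexp (-2 * π) : ℂ) ∈ arc := ⟨0, zero_mem, qParam_invertedSegment_zero⟩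
  have apex_mem_disc : (rexp (-2 * π) : ℂ) ∈ disc := by
    rw [mem_closedBall_zero_iff, Complex.norm_of_nonneg (Real.exp_pos _).le]
  have arc_preconnected : IsPreconnected arc := by
    refine IsPreconnected.image isPreconnected_Ioo _ (Continuous.continuousOn ?_)
    refine (Function.Periodic.continuous_qParam).comp ?_
    refine continuous_const.div (by fun_prop) fun t h => ?_
    simpa using congrArg im h
  have norm_lt {q : ℂ} (hq : q ∈ disc ∪ arc) : ‖q‖ < 1 ∧ ‖hauptmodul q‖ < 1 := by
    rcases hq with hq | ⟨s, hs, rfl⟩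
    · rw [mem_closedBall_zero_iff] at hq
      refine ⟨hq.trans_lt exp_lt, (norm_hauptmodul_le_of_norm_le hq exp_lt).trans_lt ?_⟩
      rw [← qParam_invertedSegment_zero]
      exact norm_hauptmodul_invertedSegment_lt_one zero_mem
    · exact ⟨norm_qParam_invertedSegment_lt_one s, norm_hauptmodul_invertedSegment_lt_one hs⟩
  exact AnalyticOnNhd.eqOn_of_preconnected_of_eventuallyEq
    (f := fun q => clausenSeries (hauptmodul q)) (g := fun q => thetaFour q ^ 4)
    (fun q hq => analyticAt_clausenSeries_hauptmodul (norm_lt hq).1 (norm_lt hq).2)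
    (fun q hq => (analyticAt_thetaFour (norm_lt hq).1).pow 4)
    ((convex_closedBall 0 _).isPreconnected.union _ apex_mem_disc apex_mem_arc arc_preconnected)
    (Or.inl (mem_closedBall_self (Real.exp_pos _).le)) clausenSeries_hauptmodul_eventuallyEq
    (Or.inr ⟨t, ht, rfl⟩)

end Arc

section Average

lemma circleMap_eq_qParam (y t : ℝ) :
    circleMap 0 (rexp (-2 * π * y)) (2 * π * t) = qParam 1 (t + y * I) := by
  rw [circleMap_zero, qParam, ofReal_exp, ← Complex.exp_add]
  congr 1
  push_cast
  linear_combination (-2 * (π : ℂ) * y) * I_sq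

lemma circleAverage_eq_integral_qParam (f : ℂ → ℂ) (y : ℝ) :
    circleAverage f 0 (rexp (-2 * π * y))
      = ∫ t in (-1 / 2 : ℝ)..(1 / 2 : ℝ), f (qParam 1 (t + y * I)) := by
  have shift (θ : ℝ) : circleMap 0 (rexp (-2 * π * y)) (θ + -π)
      = qParam 1 ((θ / (2 * π) + -1 / 2 : ℝ) + y * I) := by
    rw [← circleMap_eq_qParam]
    congr 1
    field_simp
  rw [circleAverage_eq_integral_add (-π)]
  simp only [shift]
  rw [intervalIntegral.inv_smul_integral_comp_div_add
    (f := fun t : ℝ => f (qParam 1 (t + y * I)))]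
  congr 1
  · simp
  · rw [div_self two_pi_pos.ne']
    norm_num

lemma thetaFour_pow_four_mul_thetaQuartic_mul_clausenSeries_eq {t : ℝ}
    (ht : t ∈ Ioo (-1 / 2 : ℝ) (1 / 2)) :
    thetaFour (qParam 1 (t + I / 2)) ^ 4 * thetaQuartic (qParam 1 (t + I / 2))
        * clausenSeries (hauptmodul (qParam 1 (t + I / 2)))⁻¹
      = -16 * ((t + I / 2) ^ 2 * (dedekindEta (t + I / 2) ^ 12
        + 32 * dedekindEta (t + I / 2) ^ 4 * dedekindEta (4 * t + 2 * I) ^ 8)) := by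
  have four_mul_eq : 4 * (t : ℂ) + 2 * I = 4 * (t + I / 2) := by ring
  rw [← hauptmodul_invertedSegment, clausenSeries_hauptmodul_invertedSegment ht, invertedSegment,
    thetaFour_pow_four_mul_inversion_mul_thetaQuartic (add_I_div_two_im_pos t), four_mul_eq]

lemma hasSum_invSqrtCoeff_pow_six :
    HasSum (fun k => invSqrtCoeff k ^ 6) (circleAverage
      (fun q => thetaFour q ^ 4 * thetaQuartic q * clausenSeries (hauptmodul q)⁻¹)
      0 (rexp (-π))) := by
  have hR : 0 < rexp (-π) := Real.exp_pos _
  have hR1 : rexp (-π) < 1 := Real.exp_lt_one_iff.mpr (neg_neg_of_pos pi_pos)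
  have sum := hasSum_circleAverage_mul_pow (c := 0) (R := rexp (-π))
    (Φ := fun q => thetaFour q ^ 4 * thetaQuartic q) (ζ := fun q => (hauptmodul q)⁻¹)
    summable_norm_invSqrtCoeff_pow_three
    (by
      rw [abs_of_pos hR]
      exact fun q hq => (analyticAt_thetaFour_pow_four_mul_thetaQuartic
        (norm_lt_one_of_mem_sphere hR1 hq)).continuousAt.continuousWithinAt)
    (by
      rw [abs_of_pos hR]
      exact fun q hq => ((analyticAt_hauptmodul (norm_lt_one_of_mem_sphere hR1 hq)).inv
        (hauptmodul_ne_zero (norm_lt_one_of_mem_sphere hR1 hq)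
          (ne_of_mem_sphere hq hR.ne'))).continuousAt.continuousWithinAt)
    (by
      rw [abs_of_pos hR]
      exact fun q hq => (norm_inv _).trans_le (inv_le_one_of_one_le₀ (one_le_norm_hauptmodul hq)))
  have moment (k : ℕ) : circleAverage (fun q =>
      thetaFour q ^ 4 * thetaQuartic q * (hauptmodul q)⁻¹ ^ k) 0 (rexp (-π))
        = invSqrtCoeff k ^ 3 := by
    simpa only [zpow_neg, zpow_natCast, inv_pow] using
      circleAverage_thetaFour_pow_four_mul_thetaQuartic_mul_hauptmodul_zpow hR hR1 k
  simpa only [moment, ← pow_add, Nat.reduceAdd, clausenSeries] using sum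

end Average

/-- `₆F₅(1/2,…,1/2; 1,…,1; 1) = ∑ₖ ((1/2)ₖ/k!)⁶` equals `16` times the integral of
`τ²·(η(τ)¹² + 32η(τ)⁴η(4τ)⁸) dτ` along the straight segment from `(1+i)/2` to
`(−1+i)/2` (parametrized as `τ = t + i/2`, `t` from `1/2` down to `−1/2`, giving the
minus sign below).  The eta-product is `f_{8.6.a.a}(τ/2)`. -/
theorem statement12 :
    (∑' k : ℕ, (poch (1/2) k / (Nat.factorial k : ℂ)) ^ 6)
      = -16 * ∫ t in (-1/2 : ℝ)..(1/2 : ℝ),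
          ((t : ℂ) + Complex.I / 2) ^ 2
            * (dedekindEta ((t : ℂ) + Complex.I / 2) ^ 12
                + 32 * dedekindEta ((t : ℂ) + Complex.I / 2) ^ 4
                    * dedekindEta (4 * (t : ℂ) + 2 * Complex.I) ^ 8) := by
  have radius_eq : rexp (-π) = rexp (-2 * π * (1 / 2 : ℝ)) := by ring_nf
  have height_eq : ((1 / 2 : ℝ) : ℂ) * I = I / 2 := by
    push_cast
    ring
  refine hasSum_invSqrtCoeff_pow_six.tsum_eq.trans ?_
  rw [radius_eq, circleAverage_eq_integral_qParam, height_eq,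
    ← intervalIntegral.integral_const_mul]
  refine intervalIntegral.integral_congr_Ioo_of_le (by norm_num) fun t ht =>
    thetaFour_pow_four_mul_thetaQuartic_mul_clausenSeries_eq ht
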